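/- arXiv:1512.09006 — 2 statements merged into one kernel-verified Lean document; each statement's English description precedes it below -/
import Mathlib

section
/- There exists an absolute constant c > 0 such that every set P of m points in ℝ², not all lying on one common line, determines at least c · m^{4/3} distinct distances between points of P and lines spanned by pairs of distinct points of P; that is, |{d(a, ℓ_{bc}) : a, b, c ∈ P, b ≠ c}| ≥ c · m^{4/3}, where ℓ_{bc} denotes the line through b and c. -/
noncomputable section

abbrev Pt2 := EuclideanSpace ℝ (Fin 2)

/-- A line in the plane: the set of points `a + t • v` for a nonzero direction `v`. -/
def IsLine2 (l : Set Pt2) : Prop :=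
  ∃ a v : Pt2, v ≠ 0 ∧ l = {x : Pt2 | ∃ t : ℝ, x = a + t • v}

/-- The line through two (distinct) points `b` and `c`. -/
def lineThrough2 (b c : Pt2) : Set Pt2 := {x : Pt2 | ∃ t : ℝ, x = b + t • (c - b)}

/-!
Write a non-vertical line as a point `(s, t)`, its slope and intercept. The lines at signed distance
`d` from a point `a` then form the curve `t = a.2 - s * a.1 - d * √(1 + s ^ 2)`, so `n` points and
`D` distances give `n * D` curves, and through every spanned line passes one curve for each point.
Two such curves meet at most twice, and by Rolle's theorem the slope perpendicular to the line
through their two points lies between the two intersections. Cut the spanned lines by slope into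
windows; some window straddles few perpendicular slopes, so the arcs of the curves between
consecutive spanned lines in it contain few parallel pairs and few crossing pairs with a common
endpoint. The remaining crossings are counted by the crossing inequality, which is an average over
random sets of vertices of the linear bound for plane drawings, and this bounds `D` from below
provided that the points span quadratically many lines.

By Beck's theorem, a consequence of the Szemerédi–Trotter theorem and hence of the same crossing
inequality, they do so unless a constant proportion of the points lies on one line. In that case fix
a point off the line: equal distances from points of the line to lines through the fixed point are
incidences between points and lines, and the Szemerédi–Trotter theorem shows that they are few.
-/

open Finset

section CubeRoots

variable {x y : ℝ}

lemma exists_pow_three_eq (hx : 0 ≤ x) : ∃ y, 0 ≤ y ∧ y ^ 3 = x :=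
  ⟨x ^ ((3 : ℕ) : ℝ)⁻¹, Real.rpow_nonneg hx _, Real.rpow_inv_natCast_pow hx three_ne_zero⟩

lemma pow_three_rpow_div_three (hx : 0 ≤ x) (n : ℕ) : (x ^ 3) ^ ((n : ℝ) / 3) = x ^ n := by
  rw [← Real.rpow_natCast, ← Real.rpow_mul hx, ← Real.rpow_natCast]
  congr 1
  push_cast
  ring

/-- The best sampling probability is `p = (y / x ^ 2) ^ (1 / 3)`, where `y / p = x ^ 2 * p ^ 2`. -/
lemma le_of_forall_mul_sq_le {a : ℝ} (hx : 0 ≤ x) (hy : 0 < y)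
    (h : ∀ p, 0 ≤ p → p ≤ 1 → a * p ^ 2 ≤ 3 * (y * p) + x ^ 2 * p ^ 4) :
    a ≤ 4 * (y ^ ((2 : ℝ) / 3) * x ^ ((2 : ℝ) / 3) + y) := by
  have hroots : 0 ≤ y ^ ((2 : ℝ) / 3) * x ^ ((2 : ℝ) / 3) := by positivity
  rcases le_or_gt (x ^ 2) y with hxy | hxy
  · have := h 1 zero_le_one le_rfl
    linarith
  obtain ⟨s, hs, rfl⟩ := exists_pow_three_eq hx
  obtain ⟨q, hq, rfl⟩ := exists_pow_three_eq hy.le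
  have hs0 : 0 < s := hs.lt_of_ne' <| by
    rintro rfl
    norm_num at hxy
    linarith
  have hqs : q ≤ s ^ 2 := by
    refine le_of_pow_le_pow_left₀ three_ne_zero (by positivity) ?_
    linarith [show (s ^ 3) ^ 2 = (s ^ 2) ^ 3 by ring]
  have hp := h (q / s ^ 2) (by positivity) ((div_le_one (by positivity)).2 hqs)
  rw [show ((2 : ℝ) / 3) = ((2 : ℕ) : ℝ) / 3 by norm_num, pow_three_rpow_div_three hq,
    pow_three_rpow_div_three hs]
  have hbest : 3 * (q ^ 3 * (q / s ^ 2)) + (s ^ 3) ^ 2 * (q / s ^ 2) ^ 4 =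
      4 * (q ^ 2 * s ^ 2) * (q / s ^ 2) ^ 2 := by
    field_simp
    ring
  rw [hbest] at hp
  have hq0 : q ≠ 0 := by
    rintro rfl
    norm_num at hy
  have := le_of_mul_le_mul_right hp (by positivity)
  linarith

end CubeRoots

/-- A family of `x`-monotone arcs in the plane: the arc `e` is the part of the graph of `curve e`
between the points `left e` and `right e`. -/
structure ArcFamily (ε : Type*) where
  /-- The function whose graph carries the arc. -/
  curve : ε → ℝ → ℝ
  /-- The left endpoint. -/
  left : ε → ℝ × ℝ
  /-- The right endpoint. -/
  right : ε → ℝ × ℝ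

namespace ArcFamily

variable {ε : Type*} (A : ArcFamily ε)

/-- The open interval of abscissas of the interior of an arc. -/
def span (e : ε) : Set ℝ := Set.Ioo (A.left e).1 (A.right e).1

/-- Two distinct arcs cross if their interiors meet. -/
def Cross (e e' : ε) : Prop := e ≠ e' ∧ ∃ x ∈ A.span e ∩ A.span e', A.curve e x = A.curve e' x

/-- The arc `e` passes below the arc `g` at some common interior abscissa; for arcs that do not
cross this holds as soon as it holds at one abscissa. -/
def Below (e g : ε) : Prop := ∃ x ∈ A.span e ∩ A.span g, A.curve e x < A.curve g x

/-- The arcs in `E` draw a graph with vertex set `V`: the endpoints of every arc are vertices, and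
no other vertex lies on the arc. -/
structure IsDrawing (V : Finset (ℝ × ℝ)) (E : Finset ε) : Prop where
  continuous : ∀ e ∈ E, Continuous (A.curve e)
  left_mem : ∀ e ∈ E, A.left e ∈ V
  right_mem : ∀ e ∈ E, A.right e ∈ V
  left_lt_right : ∀ e ∈ E, (A.left e).1 < (A.right e).1
  curve_left : ∀ e ∈ E, A.curve e (A.left e).1 = (A.left e).2
  curve_right : ∀ e ∈ E, A.curve e (A.right e).1 = (A.right e).2
  avoids : ∀ e ∈ E, ∀ z ∈ V, z.1 ∈ A.span e → A.curve e z.1 ≠ z.2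

/-- The drawing has no two arcs with the same endpoints. -/
def Simple (E : Finset ε) : Prop := Set.InjOn (fun e => (A.left e, A.right e)) E

variable {A} {V W : Finset (ℝ × ℝ)} {E E' : Finset ε} {e e' g g' k : ε} {x : ℝ} {z : ℝ × ℝ}

lemma Cross.symm (h : A.Cross e e') : A.Cross e' e :=
  ⟨h.1.symm, h.2.imp fun _ hx => ⟨hx.1.symm, hx.2.symm⟩⟩

lemma IsDrawing.mono (h : A.IsDrawing V E) (hE : E' ⊆ E) (hW : W ⊆ V)
    (hl : ∀ e ∈ E', A.left e ∈ W) (hr : ∀ e ∈ E', A.right e ∈ W) : A.IsDrawing W E' where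
  continuous e he := h.continuous e (hE he)
  left_mem := hl
  right_mem := hr
  left_lt_right e he := h.left_lt_right e (hE he)
  curve_left e he := h.curve_left e (hE he)
  curve_right e he := h.curve_right e (hE he)
  avoids e he z hz := h.avoids e (hE he) z (hW hz)

lemma Simple.mono (h : A.Simple E) (hE : E' ⊆ E) : A.Simple E' :=
  Set.InjOn.mono (by exact_mod_cast hE) h

section Below

lemma Below.ne (h : A.Below e g) : e ≠ g := by
  rintro rfl
  obtain ⟨x, -, hx⟩ := h
  exact lt_irrefl _ hx

lemma span_inter_span (e g : ε) :
    A.span e ∩ A.span g =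
      Set.Ioo (max (A.left e).1 (A.left g).1) (min (A.right e).1 (A.right g).1) :=
  Set.Ioo_inter_Ioo

lemma span_inter_nonempty (he : x ∈ Set.Ioc (A.left e).1 (A.right e).1)
    (hg : x ∈ Set.Ioc (A.left g).1 (A.right g).1) : (A.span e ∩ A.span g).Nonempty := by
  rw [span_inter_span, Set.nonempty_Ioo]
  exact (max_lt he.1 hg.1).trans_le (le_min he.2 hg.2)

lemma below_or_below (hcr : ¬ A.Cross e g) (hne : e ≠ g) (h : (A.span e ∩ A.span g).Nonempty) :
    A.Below e g ∨ A.Below g e := by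
  obtain ⟨x, hx⟩ := h
  have hxne : A.curve e x ≠ A.curve g x := fun h => hcr ⟨hne, x, hx, h⟩
  exact hxne.lt_or_gt.imp (fun h => ⟨x, hx, h⟩) (fun h => ⟨x, hx.symm, h⟩)

lemma Below.lt (h : A.Below e g) (hcr : ¬ A.Cross e g) (he : Continuous (A.curve e))
    (hg : Continuous (A.curve g)) (hx : x ∈ A.span e ∩ A.span g) :
    A.curve e x < A.curve g x := by
  obtain ⟨y, hy, hyl⟩ := h
  have hne : e ≠ g := Below.ne ⟨y, hy, hyl⟩
  by_contra! hle
  have hpre : IsPreconnected (A.span e ∩ A.span g) := by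
    rw [span_inter_span]
    exact isPreconnected_Ioo
  obtain ⟨w, hw, hwe⟩ :=
    hpre.intermediate_value₂ hy hx he.continuousOn hg.continuousOn hyl.le hle
  exact hcr ⟨hne, w, hw, hwe⟩

lemma Below.le (h : A.Below e g) (hcr : ¬ A.Cross e g) (he : Continuous (A.curve e))
    (hg : Continuous (A.curve g)) (hxe : x ∈ Set.Icc (A.left e).1 (A.right e).1)
    (hxg : x ∈ Set.Icc (A.left g).1 (A.right g).1) : A.curve e x ≤ A.curve g x := by
  have hne : (A.span e ∩ A.span g).Nonempty := h.imp fun _ hy => hy.1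
  have hx : x ∈ closure (A.span e ∩ A.span g) := by
    rw [span_inter_span] at hne ⊢
    rw [closure_Ioo (Set.nonempty_Ioo.1 hne).ne]
    exact ⟨max_le hxe.1 hxg.1, le_min hxe.2 hxg.2⟩
  exact closure_minimal (fun y hy => (h.lt hcr he hg hy).le) (isClosed_le he hg) hx

lemma below_of_lt (hcr : ¬ A.Cross e g) (he : Continuous (A.curve e))
    (hg : Continuous (A.curve g)) (hxe : x ∈ Set.Ioc (A.left e).1 (A.right e).1)
    (hxg : x ∈ Set.Ioc (A.left g).1 (A.right g).1) (hx : A.curve e x < A.curve g x) :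
    A.Below e g := by
  have hne : e ≠ g := by rintro rfl; exact lt_irrefl _ hx
  refine (below_or_below hcr hne (span_inter_nonempty hxe hxg)).resolve_right fun h => ?_
  exact hx.not_ge (h.le (fun h' => hcr h'.symm) hg he
    (Set.Ioc_subset_Icc_self hxg) (Set.Ioc_subset_Icc_self hxe))

end Below

section Planar

/-- A finite drawing without crossings and without parallel arcs. -/
structure IsPlane (A : ArcFamily ε) (V : Finset (ℝ × ℝ)) (E : Finset ε) : Prop
    extends A.IsDrawing V E where
  not_cross : ∀ e ∈ E, ∀ e' ∈ E, ¬ A.Cross e e'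
  simple : A.Simple E

/-- The closed region to the right of `left e` between the graphs of `e` and `g`, as far as both
arcs reach. -/
def wedge (A : ArcFamily ε) (e g : ε) : Set (ℝ × ℝ) :=
  {z | z.1 ∈ Set.Ioc (A.left e).1 (A.right e).1 ∧ z.1 ≤ (A.right g).1 ∧
    z.2 ∈ Set.Icc (A.curve e z.1) (A.curve g z.1)}

/-- The arc `g` is the one immediately above `e` among the arcs with left endpoint `left e`, and
`z` is a leftmost vertex in the wedge between them. -/
structure IsFirstInWedge (A : ArcFamily ε) (V : Finset (ℝ × ℝ)) (E : Finset ε) (e g : ε)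
    (z : ℝ × ℝ) : Prop where
  mem : g ∈ E
  left_eq : A.left g = A.left e
  below : A.Below e g
  no_between : ∀ k ∈ E, A.left k = A.left e → A.Below e k → ¬ A.Below k g
  vertex_mem : z ∈ V
  mem_wedge : z ∈ A.wedge e g
  first : ∀ w ∈ V, w ∈ A.wedge e g → z.1 ≤ w.1

namespace IsPlane

variable (h : A.IsPlane V E)
include h

lemma below_le (he : e ∈ E) (hg : g ∈ E) (hb : A.Below e g)
    (hxe : x ∈ Set.Icc (A.left e).1 (A.right e).1)
    (hxg : x ∈ Set.Icc (A.left g).1 (A.right g).1) : A.curve e x ≤ A.curve g x :=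
  hb.le (h.not_cross e he g hg) (h.continuous e he) (h.continuous g hg) hxe hxg

lemma below_of_lt (he : e ∈ E) (hg : g ∈ E) (hxe : x ∈ Set.Ioc (A.left e).1 (A.right e).1)
    (hxg : x ∈ Set.Ioc (A.left g).1 (A.right g).1) (hx : A.curve e x < A.curve g x) :
    A.Below e g :=
  ArcFamily.below_of_lt (h.not_cross e he g hg) (h.continuous e he) (h.continuous g hg) hxe hxg hx

lemma below_or_below (he : e ∈ E) (hg : g ∈ E) (hne : e ≠ g)
    (hxe : x ∈ Set.Ioc (A.left e).1 (A.right e).1)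
    (hxg : x ∈ Set.Ioc (A.left g).1 (A.right g).1) : A.Below e g ∨ A.Below g e :=
  ArcFamily.below_or_below (h.not_cross e he g hg) hne (span_inter_nonempty hxe hxg)

lemma curve_ne (he : e ∈ E) (hz : z ∈ V) (hze : z.1 ∈ Set.Ioc (A.left e).1 (A.right e).1)
    (hne : z ≠ A.right e) : A.curve e z.1 ≠ z.2 := by
  rcases hze.2.lt_or_eq with hlt | heq
  · exact h.avoids e he z hz ⟨hze.1, hlt⟩
  · intro hc
    rw [heq, h.curve_right e he] at hc
    exact hne (Prod.ext heq hc.symm)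

lemma exists_minimal_above (hne : ∃ g ∈ E, A.left g = A.left e ∧ A.Below e g) :
    ∃ g ∈ E, A.left g = A.left e ∧ A.Below e g ∧
      ∀ k ∈ E, A.left k = A.left e → A.Below e k → ¬ A.Below k g := by
  classical
  set F := {g ∈ E | A.left g = A.left e ∧ A.Below e g} with hF
  have hspan : ∀ᶠ x in nhdsWithin (A.left e).1 (Set.Ioi (A.left e).1),
      ∀ g ∈ F, x ∈ A.span g := by
    refine (Filter.eventually_all_finset F).2 fun g hg => ?_
    simp only [hF, mem_filter] at hg
    rw [← hg.2.1]
    exact Ioo_mem_nhdsGT (h.left_lt_right g hg.1)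
  obtain ⟨x, hx⟩ := hspan.exists
  obtain ⟨g, hg, hmin⟩ := F.exists_min_image (fun g => A.curve g x) <| by
    obtain ⟨g, hg⟩ := hne
    exact ⟨g, mem_filter.2 hg⟩
  have hgF := (mem_filter.1 hg)
  refine ⟨g, hgF.1, hgF.2.1, hgF.2.2, fun k hk hkl hek hkg => ?_⟩
  have hkF : k ∈ F := mem_filter.2 ⟨hk, hkl, hek⟩
  exact (hmin k hkF).not_gt (hkg.lt (h.not_cross k hk g hgF.1) (h.continuous k hk)
    (h.continuous g hgF.1) ⟨hx k hkF, hx g hg⟩)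

lemma wedge_inter_nonempty (he : e ∈ E) (hg : g ∈ E) (hl : A.left g = A.left e)
    (hb : A.Below e g) : ∃ z ∈ V, z ∈ A.wedge e g := by
  have hle := h.left_lt_right e he
  have hlg := h.left_lt_right g hg
  rw [hl] at hlg
  rcases le_total (A.right e).1 (A.right g).1 with hr | hr
  · refine ⟨_, h.right_mem e he, ⟨hle, le_rfl⟩, hr, (h.curve_right e he).le, ?_⟩
    rw [← h.curve_right e he]
    exact h.below_le he hg hb ⟨hle.le, le_rfl⟩ ⟨by rw [hl]; exact hle.le, hr⟩
  · refine ⟨_, h.right_mem g hg, ⟨hlg, hr⟩, le_rfl, ?_, (h.curve_right g hg).ge⟩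
    rw [← h.curve_right g hg]
    exact h.below_le he hg hb ⟨hlg.le, hr⟩ ⟨by rw [hl]; exact hlg.le, le_rfl⟩

lemma exists_isFirstInWedge (he : e ∈ E) (hne : ∃ g ∈ E, A.left g = A.left e ∧ A.Below e g) :
    ∃ g z, A.IsFirstInWedge V E e g z := by
  classical
  obtain ⟨g, hg, hl, hb, hno⟩ := h.exists_minimal_above hne
  obtain ⟨w, hw, hwedge⟩ := h.wedge_inter_nonempty he hg hl hb
  obtain ⟨z, hz, hmin⟩ := {w ∈ V | w ∈ A.wedge e g}.exists_min_image Prod.fst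
    ⟨w, mem_filter.2 ⟨hw, hwedge⟩⟩
  rw [mem_filter] at hz
  exact ⟨g, z, hg, hl, hb, hno, hz.1, hz.2, fun w hw hwe => hmin w (mem_filter.2 ⟨hw, hwe⟩)⟩

lemma not_through_wedge (he : e ∈ E) (hw : A.IsFirstInWedge V E e g z) (hk : k ∈ E)
    (hkz : z.1 ∈ Set.Ioc (A.left k).1 (A.right k).1) (hek : A.Below e k) : ¬ A.Below k g := by
  intro hkg
  obtain ⟨hze, hzg, -⟩ := hw.mem_wedge
  have hlg := hw.left_eq
  have between : ∀ x, (A.left e).1 ≤ x → (A.left k).1 ≤ x → x < z.1 →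
      A.curve k x ∈ Set.Icc (A.curve e x) (A.curve g x) := fun x hex hkx hxz =>
    have hxe : x ∈ Set.Icc (A.left e).1 (A.right e).1 := ⟨hex, hxz.le.trans hze.2⟩
    have hxk : x ∈ Set.Icc (A.left k).1 (A.right k).1 := ⟨hkx, hxz.le.trans hkz.2⟩
    have hxg : x ∈ Set.Icc (A.left g).1 (A.right g).1 := ⟨hlg ▸ hex, hxz.le.trans hzg⟩
    ⟨h.below_le he hk hek hxe hxk, h.below_le hk hw.mem hkg hxk hxg⟩
  rcases lt_or_ge (A.left e).1 (A.left k).1 with hlt | hle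
  · have hb := between _ hlt.le le_rfl hkz.1
    rw [h.curve_left k hk] at hb
    have hmem : A.left k ∈ A.wedge e g :=
      ⟨⟨hlt, hkz.1.le.trans hze.2⟩, hkz.1.le.trans hzg, hb⟩
    exact hkz.1.not_ge (hw.first _ (h.left_mem k hk) hmem)
  · have hb := between _ le_rfl hle hze.1
    have hcg : A.curve g (A.left e).1 = (A.left e).2 := hlg ▸ h.curve_left g hw.mem
    rw [h.curve_left e he, hcg, Set.Icc_self, Set.mem_singleton_iff] at hb
    rcases hle.lt_or_eq with hlt | heq
    · exact h.avoids k hk _ (h.left_mem e he) ⟨hlt, hze.1.trans_le hkz.2⟩ hb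
    · refine hw.no_between k hk (Prod.ext heq ?_) hek hkg
      rw [← h.curve_left k hk, heq, hb]

lemma eq_of_first_ne_right (he : e ∈ E) (he' : e' ∈ E) (hw : A.IsFirstInWedge V E e g z)
    (hw' : A.IsFirstInWedge V E e' g' z) (hz : z ≠ A.right e) (hz' : z ≠ A.right e') :
    e = e' := by
  by_contra hne
  wlog hb : A.Below e e' generalizing e e' g g'
  · exact this he' he hw' hw hz' hz (Ne.symm hne)
      ((h.below_or_below he he' hne hw.mem_wedge.1 hw'.mem_wedge.1).resolve_left hb)
  obtain ⟨hze, hzg, hz2⟩ := hw.mem_wedge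
  have hlt : A.curve e' z.1 < z.2 := (h.curve_ne he' hw.vertex_mem hw'.mem_wedge.1 hz').lt_of_le
    hw'.mem_wedge.2.2.1
  refine h.not_through_wedge he hw he' hw'.mem_wedge.1 hb ?_
  exact h.below_of_lt he' hw.mem hw'.mem_wedge.1 ⟨hw.left_eq ▸ hze.1, hzg⟩ (hlt.trans_le hz2.2)

lemma right_lt_curve (he : e ∈ E) (hw : A.IsFirstInWedge V E e g (A.right e)) :
    (A.right e).2 < A.curve g (A.right e).1 := by
  obtain ⟨hze, hzg, hz2⟩ := hw.mem_wedge
  have hne : A.right e ≠ A.right g := fun hr =>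
    hw.below.ne (h.simple he hw.mem (Prod.ext hw.left_eq.symm hr))
  have hzg' : (A.right e).1 ∈ Set.Ioc (A.left g).1 (A.right g).1 := ⟨hw.left_eq ▸ hze.1, hzg⟩
  exact (h.curve_ne hw.mem hw.vertex_mem hzg' hne).symm.lt_of_le hz2.2

lemma eq_of_first_eq_right (he : e ∈ E) (he' : e' ∈ E) (hw : A.IsFirstInWedge V E e g (A.right e))
    (hw' : A.IsFirstInWedge V E e' g' (A.right e')) (hr : A.right e = A.right e') : e = e' := by
  obtain rfl | hne := eq_or_ne g g'
  · exact h.simple he he' (Prod.ext (hw.left_eq.symm.trans hw'.left_eq) hr)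
  exfalso
  have reaches {e g : ε} (hw : A.IsFirstInWedge V E e g (A.right e)) :
      (A.right e).1 ∈ Set.Ioc (A.left g).1 (A.right g).1 :=
    ⟨hw.left_eq ▸ hw.mem_wedge.1.1, hw.mem_wedge.2.1⟩
  wlog hb : A.Below g' g generalizing e e' g g'
  · exact this he' he hw' hw hr.symm hne.symm
      ((h.below_or_below hw.mem hw'.mem hne (reaches hw) (hr ▸ reaches hw')).resolve_right hb)
  have hzg' : (A.right e).1 ∈ Set.Ioc (A.left g').1 (A.right g').1 := hr ▸ reaches hw'
  refine h.not_through_wedge he hw hw'.mem hzg' ?_ hb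
  refine h.below_of_lt he hw'.mem hw.mem_wedge.1 hzg' ?_
  rw [h.curve_right e he, hr]
  exact h.right_lt_curve he' hw'

/-- Charge every arc with an arc above it at its left endpoint to the first vertex in the wedge it
bounds. -/
theorem card_le : #E ≤ 3 * #V := by
  classical
  let U := {e ∈ E | ∃ g ∈ E, A.left g = A.left e ∧ A.Below e g}
  have htop : #(E \ U) ≤ #V := by
    refine card_le_card_of_injOn A.left (fun e he => h.left_mem e (mem_sdiff.1 he).1) ?_
    intro e he e' he' hl
    rw [mem_coe, mem_sdiff] at he he'
    by_contra hne
    have hre := h.left_lt_right e he.1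
    have hre' := h.left_lt_right e' he'.1
    have hov : (A.span e ∩ A.span e').Nonempty := by
      rw [span_inter_span, Set.nonempty_Ioo, ← hl, max_self]
      exact lt_min hre (hl ▸ hre')
    rcases ArcFamily.below_or_below (h.not_cross e he.1 e' he'.1) hne hov with hb | hb
    · exact he.2 (mem_filter.2 ⟨he.1, e', he'.1, hl.symm, hb⟩)
    · exact he'.2 (mem_filter.2 ⟨he'.1, e, he.1, hl, hb⟩)
  have hUE {e : ε} (he : e ∈ U) : e ∈ E := (mem_filter.1 he).1
  choose! g z hw using fun e (he : e ∈ U) => h.exists_isFirstInWedge (hUE he) (mem_filter.1 he).2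
  have hright : #{e ∈ U | z e = A.right e} ≤ #V := by
    refine card_le_card_of_injOn A.right (fun e he => h.right_mem e (hUE (mem_filter.1 he).1)) ?_
    intro e he e' he' hr
    obtain ⟨he, hze⟩ := mem_filter.1 he
    obtain ⟨he', hze'⟩ := mem_filter.1 he'
    exact h.eq_of_first_eq_right (hUE he) (hUE he') (hze ▸ hw e he) (hze' ▸ hw e' he') hr
  have hinner : #{e ∈ U | ¬ z e = A.right e} ≤ #V := by
    refine card_le_card_of_injOn z (fun e he => (hw e (mem_filter.1 he).1).vertex_mem) ?_
    intro e he e' he' hz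
    obtain ⟨he, hze⟩ := mem_filter.1 he
    obtain ⟨he', hze'⟩ := mem_filter.1 he'
    exact h.eq_of_first_ne_right (hUE he) (hUE he') (hw e he) (hz ▸ hw e' he') hze (hz ▸ hze')
  have hsplit := card_filter_add_card_filter_not (s := U) (fun e => z e = A.right e)
  have hE : #(E \ U) + #U = #E := card_sdiff_add_card_eq_card (filter_subset _ _)
  lia

end IsPlane

end Planar

section Crossing

open scoped Classical in
/-- The ordered pairs of crossing arcs in `E`. -/
def crossings (A : ArcFamily ε) (E : Finset ε) : Finset (ε × ε) :=
  {c ∈ E ×ˢ E | A.Cross c.1 c.2}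

/-- The two arcs start at the same vertex or end at the same vertex. -/
def Adjacent (A : ArcFamily ε) (e e' : ε) : Prop := A.left e = A.left e' ∨ A.right e = A.right e'

open scoped Classical in
/-- The ordered pairs of crossing arcs in `E` with a common endpoint. -/
def adjacentCrossings (A : ArcFamily ε) (E : Finset ε) : Finset (ε × ε) :=
  {c ∈ A.crossings E | A.Adjacent c.1 c.2}

lemma mem_crossings {c : ε × ε} :
    c ∈ A.crossings E ↔ c.1 ∈ E ∧ c.2 ∈ E ∧ A.Cross c.1 c.2 := by
  simp only [crossings, mem_filter, mem_product, and_assoc]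

lemma IsDrawing.card_le_add_crossings (h : A.IsDrawing V E) (hs : A.Simple E) :
    #E ≤ 3 * #V + #(A.crossings E) := by
  classical
  let D := (A.crossings E).image Prod.fst
  have hsub : E \ D ⊆ E := sdiff_subset
  have hplane : A.IsPlane V (E \ D) :=
    { h.mono hsub subset_rfl (fun e he => h.left_mem e (hsub he))
        (fun e he => h.right_mem e (hsub he)) with
      simple := hs.mono hsub
      not_cross := fun e he e' he' hc => (mem_sdiff.1 he).2 <|
        mem_image.2 ⟨(e, e'), mem_crossings.2 ⟨hsub he, hsub he', hc⟩, rfl⟩ }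
  have hD : #D ≤ #(A.crossings E) := card_image_le
  have hED := le_card_sdiff D E
  have := hplane.card_le
  lia

end Crossing

end ArcFamily

section RandomSubset

variable {α β : Type*} {p : ℝ} {U V : Finset α}

/-- The probability that a random subset of `V`, containing each element independently with
probability `p`, equals `W`. -/
def subsetWeight (p : ℝ) (V W : Finset α) : ℝ := p ^ #W * (1 - p) ^ (#V - #W)

lemma subsetWeight_nonneg (hp : 0 ≤ p) (hp1 : p ≤ 1) (V W : Finset α) :
    0 ≤ subsetWeight p V W :=
  mul_nonneg (pow_nonneg hp _) (pow_nonneg (sub_nonneg.2 hp1) _)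

variable [DecidableEq α]

lemma sum_subsetWeight_of_subset (p : ℝ) (hU : U ⊆ V) :
    ∑ W ∈ V.powerset with U ⊆ W, subsetWeight p V W = p ^ #U := by
  have hIcc : {W ∈ V.powerset | U ⊆ W} = (V \ U).powerset.image (U ∪ ·) := by
    rw [← Icc_eq_image_powerset hU]
    ext W
    simp only [mem_filter, mem_powerset, mem_Icc]
    exact and_comm
  have hdisj {W : Finset α} (hW : W ∈ (V \ U).powerset) : Disjoint U W :=
    disjoint_of_subset_right (mem_powerset.1 hW) disjoint_sdiff
  have hinj : Set.InjOn (U ∪ ·) ((V \ U).powerset : Set (Finset α)) := fun W hW W' hW' h => by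
    rw [← union_sdiff_cancel_left (hdisj hW), ← union_sdiff_cancel_left (hdisj hW')]
    exact congrArg (· \ U) h
  rw [hIcc, sum_image hinj]
  calc ∑ W ∈ (V \ U).powerset, subsetWeight p V (U ∪ W)
      = ∑ W ∈ (V \ U).powerset, p ^ #U * (p ^ #W * (1 - p) ^ (#(V \ U) - #W)) := by
        refine sum_congr rfl fun W hW => ?_
        rw [subsetWeight, card_union_of_disjoint (hdisj hW), card_sdiff_of_subset hU,
          Nat.sub_sub, pow_add, mul_assoc]
    _ = p ^ #U := by
        rw [← mul_sum, sum_pow_mul_eq_add_pow, add_sub_cancel, one_pow, mul_one]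

/-- The expected number of indices `b` whose set `g b` survives in the random subset. -/
lemma sum_subsetWeight_mul_card (p : ℝ) (B : Finset β) (g : β → Finset α)
    (hg : ∀ b ∈ B, g b ⊆ V) :
    ∑ W ∈ V.powerset, subsetWeight p V W * (#{b ∈ B | g b ⊆ W} : ℝ) =
      ∑ b ∈ B, p ^ #(g b) := by
  calc ∑ W ∈ V.powerset, subsetWeight p V W * (#{b ∈ B | g b ⊆ W} : ℝ)
      = ∑ W ∈ V.powerset, ∑ b ∈ B, if g b ⊆ W then subsetWeight p V W else 0 := by
        refine sum_congr rfl fun W _ => ?_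
        rw [← sum_filter, sum_const, nsmul_eq_mul, mul_comm]
    _ = ∑ b ∈ B, ∑ W ∈ V.powerset with g b ⊆ W, subsetWeight p V W := by
        rw [sum_comm]
        simp only [sum_filter]
    _ = ∑ b ∈ B, p ^ #(g b) := sum_congr rfl fun b hb => sum_subsetWeight_of_subset p (hg b hb)

end RandomSubset

namespace ArcFamily

section Crossing

variable {ε : Type*} {A : ArcFamily ε} {V : Finset (ℝ × ℝ)} {E : Finset ε} {e e' : ε} {p : ℝ}

/-- The set of endpoints of an arc. -/
def ends (A : ArcFamily ε) (e : ε) : Finset (ℝ × ℝ) := {A.left e, A.right e}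

lemma card_ends (he : (A.left e).1 < (A.right e).1) : #(A.ends e) = 2 :=
  card_pair fun h => he.ne (congrArg Prod.fst h)

lemma ends_subset_iff {W : Finset (ℝ × ℝ)} : A.ends e ⊆ W ↔ A.left e ∈ W ∧ A.right e ∈ W := by
  rw [ends, insert_subset_iff, singleton_subset_iff]

lemma IsDrawing.ends_subset (h : A.IsDrawing V E) (he : e ∈ E) : A.ends e ⊆ V :=
  ends_subset_iff.2 ⟨h.left_mem e he, h.right_mem e he⟩

lemma Cross.left_ne_right (hc : A.Cross e e') : A.left e ≠ A.right e' := by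
  obtain ⟨-, x, ⟨hx, hx'⟩, -⟩ := hc
  exact fun h => (hx.1.trans hx'.2).ne (congrArg Prod.fst h)

lemma Cross.disjoint_ends (hc : A.Cross e e') (ha : ¬ A.Adjacent e e') :
    Disjoint (A.ends e) (A.ends e') := by
  rw [Adjacent, not_or] at ha
  simp only [ends, disjoint_insert_left, disjoint_singleton_left, mem_insert, mem_singleton,
    not_or]
  exact ⟨⟨ha.1, hc.left_ne_right⟩, hc.symm.left_ne_right.symm, ha.2⟩

lemma Simple.ends_not_subset (hs : A.Simple E) (he : e ∈ E) (he' : e' ∈ E)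
    (hc : A.Cross e e') : ¬ A.ends e' ⊆ A.ends e := by
  rw [ends_subset_iff]
  simp only [ends, mem_insert, mem_singleton, hc.left_ne_right.symm, hc.symm.left_ne_right,
    or_false, false_or, not_and]
  exact fun hl hr => hc.1 (hs he he' (Prod.ext hl.symm hr.symm))

namespace IsDrawing

variable (h : A.IsDrawing V E) (hs : A.Simple E)
include h

lemma card_union_ends_of_not_adjacent (he : e ∈ E) (he' : e' ∈ E) (hc : A.Cross e e')
    (ha : ¬ A.Adjacent e e') : #(A.ends e ∪ A.ends e') = 4 := by
  rw [card_union_of_disjoint (hc.disjoint_ends ha), card_ends (h.left_lt_right e he),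
    card_ends (h.left_lt_right e' he')]

include hs

lemma three_le_card_union_ends (he : e ∈ E) (he' : e' ∈ E) (hc : A.Cross e e') :
    3 ≤ #(A.ends e ∪ A.ends e') := by
  rw [Nat.succ_le_iff, ← card_ends (h.left_lt_right e he)]
  refine card_lt_card (ssubset_iff_subset_not_subset.2 ⟨subset_union_left, fun hsub => ?_⟩)
  exact hs.ends_not_subset he he' hc (subset_union_right.trans hsub)

/-- The average of `card_le_add_crossings` over a random set of vertices. -/
lemma sum_pow_card_ends_le (hp : 0 ≤ p) (hp1 : p ≤ 1) :
    ∑ e ∈ E, p ^ #(A.ends e) ≤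
      3 * (#V * p) + ∑ c ∈ A.crossings E, p ^ #(A.ends c.1 ∪ A.ends c.2) := by
  classical
  have hcV : ∀ c ∈ A.crossings E, A.ends c.1 ∪ A.ends c.2 ⊆ V := fun c hc =>
    have hc := mem_crossings.1 hc
    union_subset (h.ends_subset hc.1) (h.ends_subset hc.2.1)
  have hV : #V * p = ∑ v ∈ V, p ^ #({v} : Finset (ℝ × ℝ)) := by
    simp only [card_singleton, pow_one, sum_const, nsmul_eq_mul]
  rw [hV, ← sum_subsetWeight_mul_card p V _ (fun v hv => singleton_subset_iff.2 hv),
    ← sum_subsetWeight_mul_card p E _ (fun e he => h.ends_subset he),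
    ← sum_subsetWeight_mul_card p _ _ hcV, mul_sum, ← sum_add_distrib]
  refine sum_le_sum fun W hW => ?_
  rw [mul_left_comm, ← mul_add]
  refine mul_le_mul_of_nonneg_left ?_ (subsetWeight_nonneg hp hp1 V W)
  have hWV : {v ∈ V | {v} ⊆ W} = W := by
    simp only [singleton_subset_iff, filter_mem_eq_inter, inter_eq_right.2 (mem_powerset.1 hW)]
  have hcr : A.crossings {e ∈ E | A.ends e ⊆ W} =
      {c ∈ A.crossings E | A.ends c.1 ∪ A.ends c.2 ⊆ W} := by
    ext c
    simp only [mem_crossings, mem_filter, union_subset_iff]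
    tauto
  have hdraw : A.IsDrawing W {e ∈ E | A.ends e ⊆ W} :=
    h.mono (filter_subset _ _) (mem_powerset.1 hW)
      (fun e he => (ends_subset_iff.1 (mem_filter.1 he).2).1)
      (fun e he => (ends_subset_iff.1 (mem_filter.1 he).2).2)
  rw [hWV, ← hcr]
  exact_mod_cast hdraw.card_le_add_crossings (hs.mono (filter_subset _ _))

theorem crossing_inequality (hp : 0 ≤ p) (hp1 : p ≤ 1) :
    #E * p ^ 2 ≤ 3 * (#V * p) + #(A.adjacentCrossings E) * p ^ 3 + #(A.crossings E) * p ^ 4 := by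
  classical
  have hE : #E * p ^ 2 = ∑ e ∈ E, p ^ #(A.ends e) := by
    rw [sum_congr rfl fun e he => by rw [card_ends (h.left_lt_right e he)], sum_const,
      nsmul_eq_mul]
  have hadj : ∑ c ∈ A.adjacentCrossings E, p ^ #(A.ends c.1 ∪ A.ends c.2) ≤
      #(A.adjacentCrossings E) * p ^ 3 := by
    rw [← nsmul_eq_mul]
    refine sum_le_card_nsmul _ _ _ fun c hc => ?_
    obtain ⟨he, he', hc⟩ := mem_crossings.1 (mem_filter.1 hc).1
    exact pow_le_pow_of_le_one hp hp1 (h.three_le_card_union_ends hs he he' hc)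
  have hdisj : ∑ c ∈ A.crossings E with ¬ A.Adjacent c.1 c.2, p ^ #(A.ends c.1 ∪ A.ends c.2) ≤
      #(A.crossings E) * p ^ 4 := by
    refine (sum_le_card_nsmul _ _ (p ^ 4) fun c hc => ?_).trans ?_
    · obtain ⟨hc, ha⟩ := mem_filter.1 hc
      obtain ⟨he, he', hc⟩ := mem_crossings.1 hc
      rw [h.card_union_ends_of_not_adjacent he he' hc ha]
    · rw [nsmul_eq_mul]
      gcongr
      exact filter_subset _ _
  have hsum := sum_filter_add_sum_filter_not (A.crossings E) (fun c => A.Adjacent c.1 c.2)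
    (fun c => p ^ #(A.ends c.1 ∪ A.ends c.2))
  have := h.sum_pow_card_ends_le hs hp hp1
  rw [adjacentCrossings] at *
  linarith

end IsDrawing

end Crossing

section Incidences

variable {ι : Type*} {V : Finset (ℝ × ℝ)} {I : Finset ι} {F : ι → ℝ → ℝ}
  {e e' : ι × (ℝ × ℝ) × (ℝ × ℝ)}

/-- The pairs of an index `i ∈ I` and a point of `V` on the graph of `F i`. -/
def incidences (V : Finset (ℝ × ℝ)) (I : Finset ι) (F : ι → ℝ → ℝ) : Finset (ι × (ℝ × ℝ)) :=
  {q ∈ I ×ˢ V | F q.1 q.2.1 = q.2.2}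

/-- The arcs on the graphs of the functions `F i`; the index `(i, u, w)` stands for the part of the
graph of `F i` from `u` to `w`. -/
def graphArcs (F : ι → ℝ → ℝ) : ArcFamily (ι × (ℝ × ℝ) × (ℝ × ℝ)) where
  curve e := F e.1
  left e := e.2.1
  right e := e.2.2

open scoped Classical in
/-- The arcs that join consecutive points of `V` on the graphs of the functions `F i`, `i ∈ I`. -/
def consecutiveArcs (V : Finset (ℝ × ℝ)) (I : Finset ι) (F : ι → ℝ → ℝ) :
    Finset (ι × (ℝ × ℝ) × (ℝ × ℝ)) :=
  {e ∈ I ×ˢ V ×ˢ V | F e.1 e.2.1.1 = e.2.1.2 ∧ F e.1 e.2.2.1 = e.2.2.2 ∧ e.2.1.1 < e.2.2.1 ∧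
    ∀ z ∈ V, z.1 ∈ Set.Ioo e.2.1.1 e.2.2.1 → F e.1 z.1 ≠ z.2}

lemma mem_incidences {q : ι × (ℝ × ℝ)} :
    q ∈ incidences V I F ↔ q.1 ∈ I ∧ q.2 ∈ V ∧ F q.1 q.2.1 = q.2.2 := by
  simp only [incidences, mem_filter, mem_product, and_assoc]

lemma mem_consecutiveArcs :
    e ∈ consecutiveArcs V I F ↔ e.1 ∈ I ∧ e.2.1 ∈ V ∧ e.2.2 ∈ V ∧ F e.1 e.2.1.1 = e.2.1.2 ∧
      F e.1 e.2.2.1 = e.2.2.2 ∧ e.2.1.1 < e.2.2.1 ∧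
      ∀ z ∈ V, z.1 ∈ Set.Ioo e.2.1.1 e.2.2.1 → F e.1 z.1 ≠ z.2 := by
  simp only [consecutiveArcs, mem_filter, mem_product, and_assoc]

lemma fst_mem_of_mem_consecutiveArcs (he : e ∈ consecutiveArcs V I F) : e.1 ∈ I :=
  (mem_consecutiveArcs.1 he).1

lemma isDrawing_consecutiveArcs (hF : ∀ i ∈ I, Continuous (F i)) :
    (graphArcs F).IsDrawing V (consecutiveArcs V I F) where
  continuous e he := hF e.1 (mem_consecutiveArcs.1 he).1
  left_mem _ he := (mem_consecutiveArcs.1 he).2.1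
  right_mem _ he := (mem_consecutiveArcs.1 he).2.2.1
  curve_left _ he := (mem_consecutiveArcs.1 he).2.2.2.1
  curve_right _ he := (mem_consecutiveArcs.1 he).2.2.2.2.1
  left_lt_right _ he := (mem_consecutiveArcs.1 he).2.2.2.2.2.1
  avoids _ he := (mem_consecutiveArcs.1 he).2.2.2.2.2.2

lemma exists_mem_consecutiveArcs {i : ι} {u w : ℝ × ℝ} (hu : (i, u) ∈ incidences V I F)
    (hw : (i, w) ∈ incidences V I F) (huw : u.1 < w.1) :
    ∃ z, (i, u, z) ∈ consecutiveArcs V I F := by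
  classical
  obtain ⟨hi, hu, hFu⟩ := mem_incidences.1 hu
  obtain ⟨-, hw, hFw⟩ := mem_incidences.1 hw
  obtain ⟨z, hz, hmin⟩ := {z ∈ V | u.1 < z.1 ∧ F i z.1 = z.2}.exists_min_image Prod.fst
    ⟨w, mem_filter.2 ⟨hw, huw, hFw⟩⟩
  obtain ⟨hz, huz, hFz⟩ := mem_filter.1 hz
  exact ⟨z, mem_consecutiveArcs.2 ⟨hi, hu, hz, hFu, hFz, huz, fun y hy hyz hFy =>
    (hmin y (mem_filter.2 ⟨hy, hyz.1, hFy⟩)).not_gt hyz.2⟩⟩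

lemma card_incidences_le_add (V : Finset (ℝ × ℝ)) (I : Finset ι) (F : ι → ℝ → ℝ) :
    #(incidences V I F) ≤ #(consecutiveArcs V I F) + #I := by
  classical
  let starts := (consecutiveArcs V I F).image fun e => (e.1, e.2.1)
  have hlast : #(incidences V I F \ starts) ≤ #I := by
    refine card_le_card_of_injOn Prod.fst
      (fun q hq => (mem_incidences.1 (mem_sdiff.1 hq).1).1) ?_
    rintro ⟨i, u⟩ hu ⟨i', w⟩ hw (rfl : i = i')
    obtain ⟨hu, hu'⟩ := mem_sdiff.1 hu
    obtain ⟨hw, hw'⟩ := mem_sdiff.1 hw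
    have not_lt {u w : ℝ × ℝ} (hu : (i, u) ∈ incidences V I F) (hu' : (i, u) ∉ starts)
        (hw : (i, w) ∈ incidences V I F) : w.1 ≤ u.1 := by
      by_contra! huw
      obtain ⟨z, hz⟩ := exists_mem_consecutiveArcs hu hw huw
      exact hu' (mem_image.2 ⟨_, hz, rfl⟩)
    have h1 : u.1 = w.1 := le_antisymm (not_lt hw hw' hu) (not_lt hu hu' hw)
    have h2 : u.2 = w.2 := by
      rw [← (mem_incidences.1 hu).2.2, ← (mem_incidences.1 hw).2.2, h1]
    rw [Prod.ext h1 h2]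
  have hstarts : #starts ≤ #(consecutiveArcs V I F) := card_image_le
  have := le_card_sdiff starts (incidences V I F)
  lia

lemma eq_of_mem_span {x : ℝ} (he : e ∈ consecutiveArcs V I F)
    (he' : e' ∈ consecutiveArcs V I F) (hi : e.1 = e'.1)
    (hx : x ∈ (graphArcs F).span e ∩ (graphArcs F).span e') : e = e' := by
  obtain ⟨i, u, w⟩ := e
  obtain ⟨i', u', w'⟩ := e'
  obtain rfl : i = i' := hi
  obtain ⟨⟨hux, hxw⟩, hux', hxw'⟩ := hx
  obtain ⟨-, hu, hw, hFu, hFw, -, hgap⟩ := mem_consecutiveArcs.1 he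
  obtain ⟨-, hu', hw', hFu', hFw', -, hgap'⟩ := mem_consecutiveArcs.1 he'
  have hleft : u.1 = u'.1 := le_antisymm
    (not_lt.1 fun h => hgap' u hu ⟨h, hux.trans hxw'⟩ hFu)
    (not_lt.1 fun h => hgap u' hu' ⟨h, hux'.trans hxw⟩ hFu')
  have hright : w.1 = w'.1 := le_antisymm
    (not_lt.1 fun h => hgap w' hw' ⟨hux.trans hxw', h⟩ hFw')
    (not_lt.1 fun h => hgap' w hw ⟨hux'.trans hxw, h⟩ hFw)
  have hu2 : u = u' := Prod.ext hleft (by rw [← hFu, ← hFu', hleft])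
  have hw2 : w = w' := Prod.ext hright (by rw [← hFw, ← hFw', hright])
  rw [hu2, hw2]

lemma Cross.fst_ne (hc : (graphArcs F).Cross e e') (he : e ∈ consecutiveArcs V I F)
    (he' : e' ∈ consecutiveArcs V I F) : e.1 ≠ e'.1 := fun hi =>
  hc.1 (hc.2.elim fun _ hx => eq_of_mem_span he he' hi hx.1)

lemma card_crossings_le {E : Finset (ι × (ℝ × ℝ) × (ℝ × ℝ))} {k : ℕ}
    (hE : E ⊆ consecutiveArcs V I F)
    (hk : ∀ i ∈ I, ∀ i' ∈ I, i ≠ i' → {x | F i x = F i' x}.encard ≤ k) :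
    #((graphArcs F).crossings E) ≤ k * #I ^ 2 := by
  classical
  rw [sq, ← card_product]
  refine card_le_mul_card_image_of_maps_to (f := fun c => (c.1.1, c.2.1)) (fun c hc => ?_) k ?_
  · obtain ⟨he, he', -⟩ := mem_crossings.1 hc
    exact mk_mem_product (fst_mem_of_mem_consecutiveArcs (hE he))
      (fst_mem_of_mem_consecutiveArcs (hE he'))
  rintro ⟨i, i'⟩ hii
  set S := {c ∈ (graphArcs F).crossings E | (c.1.1, c.2.1) = (i, i')} with hS
  have hmem : ∀ c ∈ S, (c.1 ∈ E ∧ c.2 ∈ E ∧ (graphArcs F).Cross c.1 c.2) ∧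
      c.1.1 = i ∧ c.2.1 = i' := fun c hc => by
    simpa only [hS, mem_filter, mem_crossings, Prod.mk.injEq] using hc
  obtain hempty | ⟨c₀, hc₀⟩ := S.eq_empty_or_nonempty
  · simp only [hempty, card_empty, zero_le]
  have hne : i ≠ i' := by
    obtain ⟨⟨he, he', hc⟩, rfl, rfl⟩ := hmem c₀ hc₀
    exact hc.fst_ne (hE he) (hE he')
  choose! x hspan hagree using fun c hc => (hmem c hc).1.2.2.2
  have hmaps : Set.MapsTo x S {x | F i x = F i' x} := fun c hc => by
    obtain ⟨-, rfl, rfl⟩ := hmem c hc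
    exact hagree c hc
  have hinj : Set.InjOn x S := fun c hc d hd hcd => by
    obtain ⟨⟨hce, hce', -⟩, hci, hci'⟩ := hmem c hc
    obtain ⟨⟨hde, hde', -⟩, hdi, hdi'⟩ := hmem d hd
    have hcs := hspan c hc
    have hds := hcd ▸ hspan d hd
    exact Prod.ext (eq_of_mem_span (hE hce) (hE hde) (hci.trans hdi.symm) ⟨hcs.1, hds.1⟩)
      (eq_of_mem_span (hE hce') (hE hde') (hci'.trans hdi'.symm) ⟨hcs.2, hds.2⟩)
  have hcard := (Set.encard_le_encard_of_injOn hmaps hinj).trans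
    (hk i (mem_product.1 hii).1 i' (mem_product.1 hii).2 hne)
  rw [Set.encard_coe_eq_coe_finsetCard] at hcard
  exact_mod_cast hcard

end Incidences

section SzemerediTrotter

variable {ι : Type*} {I : Finset ι} {F : ι → ℝ → ℝ}

lemma simple_consecutiveArcs (V : Finset (ℝ × ℝ))
    (hI : ∀ i ∈ I, ∀ i' ∈ I, i ≠ i' → {x | F i x = F i' x}.Subsingleton) :
    (graphArcs F).Simple (consecutiveArcs V I F) := by
  rintro ⟨i, u, w⟩ he ⟨i', u', w'⟩ he' huw
  obtain ⟨rfl, rfl⟩ : u = u' ∧ w = w' := Prod.mk.inj huw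
  obtain ⟨hi, -, -, hFu, hFw, huw, -⟩ := mem_consecutiveArcs.1 he
  obtain ⟨hi', -, -, hFu', hFw', -⟩ := mem_consecutiveArcs.1 he'
  by_contra hne
  have hii : i ≠ i' := by rintro rfl; exact hne rfl
  exact huw.ne (hI i hi i' hi' hii (hFu.trans hFu'.symm) (hFw.trans hFw'.symm))

lemma adjacentCrossings_consecutiveArcs (V : Finset (ℝ × ℝ))
    (hI : ∀ i ∈ I, ∀ i' ∈ I, i ≠ i' → {x | F i x = F i' x}.Subsingleton) :
    (graphArcs F).adjacentCrossings (consecutiveArcs V I F) = ∅ := by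
  simp only [adjacentCrossings, filter_eq_empty_iff]
  rintro ⟨⟨i, u, w⟩, ⟨i', u', w'⟩⟩ hc
  obtain ⟨he, he', hc⟩ := mem_crossings.1 hc
  have hii := hc.fst_ne he he'
  obtain ⟨hi, -, -, hFu, hFw, -⟩ := mem_consecutiveArcs.1 he
  obtain ⟨hi', -, -, hFu', hFw', -⟩ := mem_consecutiveArcs.1 he'
  obtain ⟨-, x, ⟨hx, -⟩, hFx⟩ := hc
  rintro (rfl | rfl : u = u' ∨ w = w')
  · exact hx.1.ne (hI i hi i' hi' hii (hFu.trans hFu'.symm) hFx)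
  · exact hx.2.ne (hI i hi i' hi' hii hFx (hFw.trans hFw'.symm))

/-- The Szemerédi–Trotter bound for graphs of functions that pairwise agree at most once. -/
theorem card_incidences_le (V : Finset (ℝ × ℝ)) (hF : ∀ i ∈ I, Continuous (F i))
    (hI : ∀ i ∈ I, ∀ i' ∈ I, i ≠ i' → {x | F i x = F i' x}.Subsingleton) :
    (#(incidences V I F) : ℝ) ≤
      4 * ((#V : ℝ) ^ ((2 : ℝ) / 3) * (#I : ℝ) ^ ((2 : ℝ) / 3) + #V + #I) := by
  obtain rfl | hV := V.eq_empty_or_nonempty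
  · have hempty : incidences ∅ I F = ∅ := by rw [incidences, product_empty, filter_empty]
    rw [hempty, card_empty, Nat.cast_zero]
    positivity
  have hcr : (#((graphArcs F).crossings (consecutiveArcs V I F)) : ℝ) ≤ (#I : ℝ) ^ 2 := by
    have := card_crossings_le (k := 1) (subset_refl (consecutiveArcs V I F))
      fun i hi i' hi' hne => Set.encard_le_one_iff_subsingleton.2 (hI i hi i' hi' hne)
    exact_mod_cast (one_mul (#I ^ 2)) ▸ this
  have harcs : (#(consecutiveArcs V I F) : ℝ) ≤
      4 * ((#V : ℝ) ^ ((2 : ℝ) / 3) * (#I : ℝ) ^ ((2 : ℝ) / 3) + #V) := by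
    refine le_of_forall_mul_sq_le (Nat.cast_nonneg _) (by exact_mod_cast hV.card_pos) ?_
    intro p hp hp1
    have hineq := (isDrawing_consecutiveArcs hF).crossing_inequality
      (simple_consecutiveArcs V hI) hp hp1
    rw [adjacentCrossings_consecutiveArcs V hI, card_empty, Nat.cast_zero, zero_mul,
      add_zero] at hineq
    exact hineq.trans (by gcongr)
  have hinc : (#(incidences V I F) : ℝ) ≤ #(consecutiveArcs V I F) + #I := by
    exact_mod_cast card_incidences_le_add V I F
  linarith [Nat.cast_nonneg (α := ℝ) #I]

end SzemerediTrotter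

end ArcFamily

section RichLines

variable {P L : Finset (ℝ × ℝ)} {l l' p q : ℝ × ℝ}

/-- The affine function with slope `l.1` and intercept `l.2`; its graph is a non-vertical line. -/
def lineFun (l : ℝ × ℝ) (x : ℝ) : ℝ := l.1 * x + l.2

/-- The points of `P` on the graph of `lineFun l`. -/
def pointsOn (P : Finset (ℝ × ℝ)) (l : ℝ × ℝ) : Finset (ℝ × ℝ) := {p ∈ P | lineFun l p.1 = p.2}

/-- The slope and the intercept of the line through two points with distinct abscissas. -/
def lineOf (p q : ℝ × ℝ) : ℝ × ℝ :=
  ((q.2 - p.2) / (q.1 - p.1), p.2 - (q.2 - p.2) / (q.1 - p.1) * p.1)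

/-- The non-vertical lines through two points of `P`, given by slope and intercept. -/
def spannedLines (P : Finset (ℝ × ℝ)) : Finset (ℝ × ℝ) :=
  {c ∈ P ×ˢ P | c.1.1 ≠ c.2.1}.image fun c => lineOf c.1 c.2

lemma mem_pointsOn : p ∈ pointsOn P l ↔ p ∈ P ∧ lineFun l p.1 = p.2 := mem_filter

lemma continuous_lineFun (l : ℝ × ℝ) : Continuous (lineFun l) := by
  unfold lineFun
  fun_prop

lemma subsingleton_setOf_lineFun_eq (h : l ≠ l') :
    {x | lineFun l x = lineFun l' x}.Subsingleton := by
  intro x (hx : l.1 * x + l.2 = l'.1 * x + l'.2) y (hy : l.1 * y + l.2 = l'.1 * y + l'.2)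
  have hslope : l.1 ≠ l'.1 := fun h1 => h (Prod.ext h1 (by rw [h1] at hx; linarith))
  refine mul_left_cancel₀ (sub_ne_zero.2 hslope) ?_
  linear_combination hx - hy

lemma lineFun_lineOf_left (p q : ℝ × ℝ) : lineFun (lineOf p q) p.1 = p.2 :=
  add_sub_cancel _ _

lemma lineFun_lineOf_right (h : p.1 ≠ q.1) : lineFun (lineOf p q) q.1 = q.2 := by
  have := sub_ne_zero.2 h.symm
  rw [lineFun, lineOf]
  field_simp
  ring

lemma card_incidences_lineFun (P L : Finset (ℝ × ℝ)) :
    #(ArcFamily.incidences P L lineFun) = ∑ l ∈ L, #(pointsOn P l) := by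
  simp only [ArcFamily.incidences, pointsOn, card_filter, sum_product]

lemma card_incidences_lineFun_le (P L : Finset (ℝ × ℝ)) :
    (#(ArcFamily.incidences P L lineFun) : ℝ) ≤
      4 * ((#P : ℝ) ^ ((2 : ℝ) / 3) * (#L : ℝ) ^ ((2 : ℝ) / 3) + #P + #L) :=
  ArcFamily.card_incidences_le P (fun l _ => continuous_lineFun l)
    fun _ _ _ _ h => subsingleton_setOf_lineFun_eq h

lemma card_le_of_forall_le_card_pointsOn {k : ℕ} (hk : 8 ≤ k)
    (hL : ∀ l ∈ L, k ≤ #(pointsOn P l)) :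
    (#L : ℝ) ≤ 4096 * (#P : ℝ) ^ 2 / (k : ℝ) ^ 3 + 16 * #P / k := by
  have hrich : (#L * k : ℝ) ≤ #(ArcFamily.incidences P L lineFun) := by
    rw [card_incidences_lineFun]
    exact_mod_cast card_nsmul_le_sum L _ k hL
  have hinc := hrich.trans (card_incidences_lineFun_le P L)
  obtain ⟨q, hq, hqP⟩ := exists_pow_three_eq (Nat.cast_nonneg (α := ℝ) #P)
  obtain ⟨t, ht, htL⟩ := exists_pow_three_eq (Nat.cast_nonneg (α := ℝ) #L)
  rw [← hqP, ← htL, show ((2 : ℝ) / 3) = ((2 : ℕ) : ℝ) / 3 by norm_num,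
    pow_three_rpow_div_three hq, pow_three_rpow_div_three ht] at hinc
  rw [← hqP, ← htL]
  have hk8 : (8 : ℝ) ≤ k := by exact_mod_cast hk
  have hk0 : (0 : ℝ) < k := by linarith
  have hhalf : t ^ 3 * k ≤ 8 * (q ^ 2 * t ^ 2) + 8 * q ^ 3 := by
    nlinarith [mul_le_mul_of_nonneg_left hk8 (pow_nonneg ht 3)]
  rcases le_total (q ^ 2 * t ^ 2) (q ^ 3) with hsmall | hlarge
  · have : t ^ 3 ≤ 16 * q ^ 3 / k := by
      rw [le_div_iff₀ hk0]
      linarith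
    exact this.trans (le_add_of_nonneg_left (by positivity))
  · have htk : t * k ≤ 16 * q ^ 2 := by
      rcases ht.eq_or_lt with rfl | ht
      · rw [zero_mul]
        positivity
      · refine le_of_mul_le_mul_left ?_ (pow_pos ht 2)
        linarith
    have : t ^ 3 ≤ 4096 * (q ^ 3) ^ 2 / (k : ℝ) ^ 3 := by
      rw [le_div_iff₀ (by positivity)]
      calc t ^ 3 * (k : ℝ) ^ 3 = (t * k) ^ 3 := by ring
        _ ≤ (16 * q ^ 2) ^ 3 := by gcongr
        _ = 4096 * (q ^ 3) ^ 2 := by ring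
    exact this.trans (le_add_of_nonneg_right (by positivity))

end RichLines

section Beck

variable {P : Finset (ℝ × ℝ)}

lemma sq_le_sq_add_sum_Ioc (K n : ℕ) : n ^ 2 ≤ K ^ 2 + ∑ k ∈ Ioc K n, 2 * k := by
  rcases le_total n K with h | h
  · exact (Nat.pow_le_pow_left h 2).trans (Nat.le_add_right _ _)
  · induction n, h using Nat.le_induction with
    | base => exact Nat.le_add_right _ _
    | succ n hn ih =>
      rw [sum_Ioc_succ_top (by lia)]
      linarith [show (n + 1) ^ 2 = n ^ 2 + 2 * n + 1 by ring]

lemma sum_sq_le_add_sum_card {α : Type*} (L : Finset α) (n : α → ℕ) (K : ℕ) {N : ℕ}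
    (hN : ∀ l ∈ L, n l ≤ N) :
    ∑ l ∈ L, n l ^ 2 ≤ K ^ 2 * #L + ∑ k ∈ Ioc K N, 2 * k * #{l ∈ L | k ≤ n l} := by
  calc ∑ l ∈ L, n l ^ 2
      ≤ ∑ l ∈ L, (K ^ 2 + ∑ k ∈ Ioc K N with k ≤ n l, 2 * k) := by
        refine sum_le_sum fun l hl => (sq_le_sq_add_sum_Ioc K (n l)).trans ?_
        have hIoc : {k ∈ Ioc K N | k ≤ n l} = Ioc K (n l) := by
          ext k
          have := hN l hl
          simp only [mem_filter, mem_Ioc]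
          lia
        rw [hIoc]
    _ = K ^ 2 * #L + ∑ k ∈ Ioc K N, 2 * k * #{l ∈ L | k ≤ n l} := by
        rw [sum_add_distrib, sum_const, smul_eq_mul, mul_comm]
        congr 1
        simp only [sum_filter]
        rw [sum_comm]
        simp only [← sum_filter, sum_const, smul_eq_mul, mul_comm]

lemma sum_Ioc_inv_sq_le_inv {K : ℕ} (hK : K ≠ 0) (N : ℕ) :
    ∑ k ∈ Ioc K N, ((k : ℝ) ^ 2)⁻¹ ≤ (K : ℝ)⁻¹ := by
  rcases le_total K N with h | h
  · exact (sum_Ioc_inv_sq_le_sub hK h).trans (sub_le_self _ (by positivity))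
  · rw [Ioc_eq_empty_of_le h, sum_empty]
    positivity

lemma card_sq_le_two_mul_card_pairs (hv : ∀ x, 2 * #{p ∈ P | p.1 = x} ≤ #P) :
    #P ^ 2 ≤ 2 * #{c ∈ P ×ˢ P | c.1.1 ≠ c.2.1} := by
  have hsplit := card_filter_add_card_filter_not (s := P ×ˢ P) (fun c => c.1.1 ≠ c.2.1)
  have hvert : 2 * #{c ∈ P ×ˢ P | ¬ c.1.1 ≠ c.2.1} ≤ #P * #P := by
    have hsum : #{c ∈ P ×ˢ P | ¬ c.1.1 ≠ c.2.1} = ∑ p ∈ P, #{q ∈ P | q.1 = p.1} := by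
      simp only [card_filter, sum_product, not_not, eq_comm]
    rw [hsum, mul_sum, ← smul_eq_mul #P]
    exact sum_le_card_nsmul P _ _ fun p _ => hv p.1
  rw [card_product] at hsplit
  linarith [sq #P]

lemma card_pairs_le_sum_card_pointsOn_sq (P : Finset (ℝ × ℝ)) :
    #{c ∈ P ×ˢ P | c.1.1 ≠ c.2.1} ≤ ∑ l ∈ spannedLines P, #(pointsOn P l) ^ 2 := by
  rw [card_eq_sum_card_fiberwise fun c hc => mem_image_of_mem (fun c => lineOf c.1 c.2) hc]
  refine sum_le_sum fun l _ => ?_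
  rw [sq, ← card_product]
  refine card_le_card fun c hc => ?_
  obtain ⟨hpair, rfl⟩ := mem_filter.1 hc
  obtain ⟨hprod, hne⟩ := mem_filter.1 hpair
  obtain ⟨hc1, hc2⟩ := mem_product.1 hprod
  exact mem_product.2 ⟨mem_pointsOn.2 ⟨hc1, lineFun_lineOf_left _ _⟩,
    mem_pointsOn.2 ⟨hc2, lineFun_lineOf_right hne⟩⟩

/-- Beck's theorem. The lines with at most `65536` points of `P` carry a positive proportion of the
pairs of points, because by the bound for rich lines the others carry only a small one. -/
theorem card_sq_le_card_spannedLines (hl : ∀ l, 256 * #(pointsOn P l) ≤ #P)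
    (hv : ∀ x, 2 * #{p ∈ P | p.1 = x} ≤ #P) : #P ^ 2 ≤ 2 ^ 34 * #(spannedLines P) := by
  set L := spannedLines P
  set N := #P / 256
  have hpairs : (#P : ℝ) ^ 2 ≤ 2 * (65536 ^ 2 * #L +
      ∑ k ∈ Ioc 65536 N, 2 * (k : ℝ) * #{l ∈ L | k ≤ #(pointsOn P l)}) := by
    have hN : ∀ l ∈ L, #(pointsOn P l) ≤ N := fun l _ => by have := hl l; lia
    have := (card_sq_le_two_mul_card_pairs hv).trans <| Nat.mul_le_mul_left 2 <|
      (card_pairs_le_sum_card_pointsOn_sq P).trans (sum_sq_le_add_sum_card L _ 65536 hN)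
    exact_mod_cast this
  have hterm : ∀ k ∈ Ioc 65536 N, 2 * (k : ℝ) * #{l ∈ L | k ≤ #(pointsOn P l)} ≤
      8192 * (#P : ℝ) ^ 2 * ((k : ℝ) ^ 2)⁻¹ + 32 * #P := fun k hk => by
    have hk := (mem_Ioc.1 hk).1
    have hk0 : (0 : ℝ) < k := by exact_mod_cast (show 0 < k by lia)
    have := card_le_of_forall_le_card_pointsOn (P := P) (L := {l ∈ L | k ≤ #(pointsOn P l)})
      (show 8 ≤ k by lia) fun l hl => (mem_filter.1 hl).2
    refine (mul_le_mul_of_nonneg_left this (by positivity)).trans_eq ?_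
    field_simp
    ring
  have hsum := sum_le_sum hterm
  rw [sum_add_distrib, ← mul_sum, sum_const, nsmul_eq_mul, Nat.card_Ioc] at hsum
  have hinv : 8192 * (#P : ℝ) ^ 2 * ∑ k ∈ Ioc 65536 N, ((k : ℝ) ^ 2)⁻¹ ≤ (#P : ℝ) ^ 2 / 8 :=
    (mul_le_mul_of_nonneg_left (sum_Ioc_inv_sq_le_inv (by norm_num) N) (by positivity)).trans_eq
      (by push_cast; ring)
  have hconst : ((N - 65536 : ℕ) : ℝ) * (32 * #P) ≤ (#P : ℝ) ^ 2 / 8 := by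
    have hN : ((N - 65536 : ℕ) : ℝ) ≤ #P / 256 :=
      (Nat.cast_le.2 (Nat.sub_le _ _)).trans Nat.cast_div_le
    calc ((N - 65536 : ℕ) : ℝ) * (32 * #P) ≤ #P / 256 * (32 * #P) := by gcongr
      _ = (#P : ℝ) ^ 2 / 8 := by ring
  have : (#P : ℝ) ^ 2 ≤ 2 ^ 34 * #L := by
    linarith
  exact_mod_cast this

end Beck

section HeavyLine

variable {h x x' y y' u u' : ℝ}

lemma card_sq_le_card_mul_card_filter_eq {α β : Type*} [DecidableEq β] {s : Finset α}
    {t : Finset β} {f : α → β} (hf : ∀ a ∈ s, f a ∈ t) :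
    #s ^ 2 ≤ #t * #{c ∈ s ×ˢ s | f c.1 = f c.2} := by
  have hcollisions : #{c ∈ s ×ˢ s | f c.1 = f c.2} = ∑ b ∈ t, #{a ∈ s | f a = b} ^ 2 := by
    rw [card_eq_sum_card_fiberwise (f := fun c => f c.1) (t := t)
      fun c hc => hf _ (mem_product.1 (mem_filter.1 hc).1).1]
    refine sum_congr rfl fun b _ => ?_
    rw [sq, ← card_product, ← filter_product, filter_filter]
    refine congrArg card (filter_congr fun c _ => ?_)
    constructor
    · rintro ⟨hc, rfl⟩
      exact ⟨rfl, hc.symm⟩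
    · rintro ⟨rfl, hc⟩
      exact ⟨hc.symm, rfl⟩
  rw [hcollisions, card_eq_sum_card_fiberwise hf]
  exact sq_sum_le_card_mul_sum_sq

/-- The signed distance, divided by `h`, from the point `(y, 0)` to the line through `(x, 0)` and
`(0, h)`. -/
def axisDist (h x y : ℝ) : ℝ := (y - x) / √(h ^ 2 + x ^ 2)

/-- The slope and the intercept of the affine function that maps `y` to the `y'` with
`axisDist h x' y' = axisDist h x y`. -/
def axisDistLine (h x x' : ℝ) : ℝ × ℝ :=
  (√(h ^ 2 + x' ^ 2) / √(h ^ 2 + x ^ 2), x' - √(h ^ 2 + x' ^ 2) / √(h ^ 2 + x ^ 2) * x)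

lemma lineFun_axisDistLine (hh : h ≠ 0) (hxy : axisDist h x y = axisDist h x' y') :
    lineFun (axisDistLine h x x') y = y' := by
  rw [axisDist, axisDist, div_eq_div_iff (by positivity) (by positivity)] at hxy
  rw [axisDistLine, lineFun]
  have : √(h ^ 2 + x ^ 2) ≠ 0 := by positivity
  field_simp
  linarith

lemma axisDist_right_injective (hh : h ≠ 0) (x : ℝ) : Function.Injective (axisDist h x) := by
  intro y y' hy
  rw [axisDist, axisDist, div_left_inj' (by positivity)] at hy
  linarith

/-- If the slope `r` and the intercept `b ≠ 0` are given, then `x' = r * x + b` turns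
`h ^ 2 + x' ^ 2 = r ^ 2 * (h ^ 2 + x ^ 2)` into a linear equation for `x`. -/
lemma axisDistLine_injective (hh : h ≠ 0) (hx : x ≠ x')
    (heq : axisDistLine h x x' = axisDistLine h u u') : x = u ∧ x' = u' := by
  have hscale (x x' : ℝ) : h ^ 2 + x' ^ 2 = (axisDistLine h x x').1 ^ 2 * (h ^ 2 + x ^ 2) := by
    rw [axisDistLine, div_pow, Real.sq_sqrt (by positivity), Real.sq_sqrt (by positivity),
      div_mul_cancel₀ _ (by positivity)]
  have hmap (x x' : ℝ) : x' = (axisDistLine h x x').1 * x + (axisDistLine h x x').2 :=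
    (add_sub_cancel _ _).symm
  have hr : 0 < (axisDistLine h x x').1 := div_pos (by positivity) (by positivity)
  have hx1 := hscale x x'
  have hx2 := hmap x x'
  have hu1 := hscale u u'
  have hu2 := hmap u u'
  rw [← heq] at hu1 hu2
  set r := (axisDistLine h x x').1
  set b := (axisDistLine h x x').2
  have hb : b ≠ 0 := fun hb => by
    rw [hb, add_zero] at hx2
    have : r ^ 2 = 1 := by
      refine mul_right_cancel₀ (pow_ne_zero 2 hh) ?_
      rw [hx2] at hx1
      linarith
    rw [(pow_eq_one_iff_of_nonneg hr.le two_ne_zero).1 this, one_mul] at hx2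
    exact hx hx2.symm
  have hxu : x = u := by
    refine mul_left_cancel₀ (mul_ne_zero hr.ne' hb) ?_
    rw [hx2] at hx1
    rw [hu2] at hu1
    linarith
  exact ⟨hxu, by rw [hx2, hu2, hxu]⟩

lemma card_axisDist_collisions_le (hh : h ≠ 0) (T : Finset ℝ) :
    #{c ∈ (T ×ˢ T) ×ˢ T ×ˢ T | axisDist h c.1.1 c.1.2 = axisDist h c.2.1 c.2.2} ≤
      #T ^ 2 + #(ArcFamily.incidences (T ×ˢ T)
        ((T ×ˢ T).image fun p => axisDistLine h p.1 p.2) lineFun) := by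
  rw [← card_filter_add_card_filter_not fun c => c.1.1 = c.2.1]
  refine add_le_add ?_ ?_
  · rw [sq, ← card_product]
    refine card_le_card_of_injOn Prod.fst (fun c hc => ?_) ?_
    · exact (mem_product.1 (mem_filter.1 (mem_filter.1 hc).1).1).1
    rintro ⟨⟨x, y⟩, x', y'⟩ hc ⟨⟨u, v⟩, u', v'⟩ hd hcd
    obtain ⟨rfl, rfl⟩ := Prod.mk.inj hcd
    obtain ⟨hc, rfl : x = x'⟩ := mem_filter.1 hc
    obtain ⟨hd, rfl : x = u'⟩ := mem_filter.1 hd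
    obtain rfl : y' = v' := axisDist_right_injective hh x
      ((mem_filter.1 hc).2.symm.trans (mem_filter.1 hd).2)
    rfl
  · refine card_le_card_of_injOn (fun c => (axisDistLine h c.1.1 c.2.1, c.1.2, c.2.2))
      (fun c hc => ?_) ?_
    · obtain ⟨hT, hc⟩ := mem_filter.1 (mem_filter.1 hc).1
      simp only [mem_product] at hT
      exact ArcFamily.mem_incidences.2 ⟨mem_image.2 ⟨(c.1.1, c.2.1),
        mk_mem_product hT.1.1 hT.2.1, rfl⟩, mk_mem_product hT.1.2 hT.2.2,
        lineFun_axisDistLine hh hc⟩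
    rintro ⟨⟨x, y⟩, x', y'⟩ hc ⟨⟨u, v⟩, u', v'⟩ - hcd
    simp only [Prod.mk.injEq] at hcd
    obtain ⟨hline, rfl, rfl⟩ := hcd
    obtain ⟨rfl, rfl⟩ := axisDistLine_injective hh (mem_filter.1 hc).2 hline
    rfl

theorem card_rpow_le_of_axisDist_mem {T S : Finset ℝ} (hh : h ≠ 0)
    (hS : ∀ x ∈ T, ∀ y ∈ T, axisDist h x y ∈ S) :
    (#T : ℝ) ^ ((4 : ℝ) / 3) ≤ 13 * #S := by
  obtain ⟨q, hq, hqT⟩ := exists_pow_three_eq (Nat.cast_nonneg (α := ℝ) #T)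
  have hroot : ((q ^ 2) ^ 3) ^ ((2 : ℝ) / 3) = (q ^ 2) ^ 2 :=
    pow_three_rpow_div_three (by positivity) 2
  rw [← hqT, show ((4 : ℝ) / 3) = ((4 : ℕ) : ℝ) / 3 by norm_num, pow_three_rpow_div_three hq]
  obtain rfl | hT := T.eq_empty_or_nonempty
  · rw [card_empty, Nat.cast_zero, pow_eq_zero_iff three_ne_zero] at hqT
    rw [hqT, zero_pow four_ne_zero]
    positivity
  have hq1 : 1 ≤ q := by
    refine le_of_pow_le_pow_left₀ three_ne_zero hq ?_
    rw [one_pow, hqT]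
    exact_mod_cast hT.card_pos
  set L := (T ×ˢ T).image fun p => axisDistLine h p.1 p.2
  have hTT : (#(T ×ˢ T) : ℝ) = (q ^ 2) ^ 3 := by
    rw [card_product, Nat.cast_mul, ← hqT]
    ring
  have hL : (#L : ℝ) ≤ (q ^ 2) ^ 3 := hTT ▸ Nat.cast_le.2 card_image_le
  have hinc : (#(ArcFamily.incidences (T ×ˢ T) L lineFun) : ℝ) ≤
      4 * ((q ^ 2) ^ 2 * (q ^ 2) ^ 2 + (q ^ 2) ^ 3 + (q ^ 2) ^ 3) := by
    refine (card_incidences_lineFun_le _ _).trans ?_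
    rw [hTT, ← hroot]
    gcongr
  have hcs : (#(T ×ˢ T) : ℝ) ^ 2 ≤
      #S * (#T ^ 2 + #(ArcFamily.incidences (T ×ˢ T) L lineFun)) := by
    exact_mod_cast (card_sq_le_card_mul_card_filter_eq (f := fun p => axisDist h p.1 p.2)
      fun p hp => hS _ (mem_product.1 hp).1 _ (mem_product.1 hp).2).trans
        (Nat.mul_le_mul_left _ (card_axisDist_collisions_le hh T))
  have hbound : q ^ 4 * q ^ 8 ≤ 13 * #S * q ^ 8 := by
    calc q ^ 4 * q ^ 8 = (#(T ×ˢ T) : ℝ) ^ 2 := by rw [hTT]; ring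
      _ ≤ #S * ((q ^ 3) ^ 2 + 4 * ((q ^ 2) ^ 2 * (q ^ 2) ^ 2 + (q ^ 2) ^ 3 + (q ^ 2) ^ 3)) := by
        rw [hqT]
        exact hcs.trans (by gcongr)
      _ = #S * (4 * q ^ 8 + 9 * q ^ 6) := by ring
      _ ≤ #S * (4 * q ^ 8 + 9 * q ^ 8) := by gcongr; lia
      _ = 13 * #S * q ^ 8 := by ring
  exact le_of_mul_le_mul_right hbound (by positivity)

end HeavyLine

section Windows

variable {α β γ : Type*} [LinearOrder γ] {K : Finset α} {κ : α → γ} {x : β → γ}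

open scoped Classical in
/-- The elements `k` of `K` for which `κ k` lies strictly between two values of `x` on `V`. -/
def straddled (K : Finset α) (κ : α → γ) (x : β → γ) (V : Finset β) : Finset α :=
  {k ∈ K | ∃ v ∈ V, ∃ w ∈ V, κ k ∈ Set.Ioo (x v) (x w)}

lemma mem_straddled {V : Finset β} {k : α} :
    k ∈ straddled K κ x V ↔ k ∈ K ∧ ∃ v ∈ V, ∃ w ∈ V, κ k ∈ Set.Ioo (x v) (x w) := by
  simp only [straddled, mem_filter]

lemma exists_subset_card_eq_forall_le [DecidableEq β] (x : β → γ) {V₀ : Finset β} {r : ℕ}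
    (hr : r ≤ #V₀) : ∃ V ⊆ V₀, #V = r ∧ ∀ v ∈ V, ∀ w ∈ V₀ \ V, x v ≤ x w := by
  induction r with
  | zero => exact ⟨∅, empty_subset _, rfl, fun v hv => absurd hv (notMem_empty v)⟩
  | succ r ih =>
    obtain ⟨V, hV, hVr, hlow⟩ := ih (by lia)
    obtain ⟨w, hw, hmin⟩ := (V₀ \ V).exists_min_image x <| card_pos.1 <| by
      rw [card_sdiff_of_subset hV]
      lia
    obtain ⟨hwV₀, hwV⟩ := mem_sdiff.1 hw
    refine ⟨insert w V, insert_subset hwV₀ hV, by rw [card_insert_of_notMem hwV, hVr], ?_⟩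
    intro v hv z hz
    have hzV : z ∈ V₀ \ V := sdiff_subset_sdiff subset_rfl (subset_insert w V) hz
    rcases mem_insert.1 hv with rfl | hv
    · exact hmin z hzV
    · exact hlow v hv z hzV

/-- Cut `V₀` into `m` windows of size `r`. Since no element of `K` is straddled by two of them, some
window straddles at most `#K / m` elements. -/
lemma exists_subset_card_straddled_le {m r : ℕ} (hm : 1 ≤ m) {V₀ : Finset β} (hr : m * r ≤ #V₀) :
    ∃ V ⊆ V₀, #V = r ∧ m * #(straddled K κ x V) ≤ #K := by
  classical
  induction m, hm using Nat.le_induction generalizing V₀ K with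
  | base =>
    obtain ⟨V, hV, hVr⟩ := exists_subset_card_eq (one_mul r ▸ hr)
    exact ⟨V, hV, hVr, by rw [one_mul]; exact card_filter_le _ _⟩
  | succ m hm ih =>
    rw [add_one_mul] at hr
    obtain ⟨V, hV, hVr, hlow⟩ := exists_subset_card_eq_forall_le x (show r ≤ #V₀ by lia)
    set S := straddled K κ x V
    rcases le_or_gt ((m + 1) * #S) #K with hS | hS
    · exact ⟨V, hV, hVr, hS⟩
    have hSK : S ⊆ K := filter_subset _ _
    obtain ⟨U, hU, hUr, hUK⟩ := ih (K := K \ S) (V₀ := V₀ \ V) <| by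
      rw [card_sdiff_of_subset hV]
      lia
    refine ⟨U, hU.trans sdiff_subset, hUr, ?_⟩
    have hdisj : straddled K κ x U ⊆ straddled (K \ S) κ x U := fun k hk => by
      obtain ⟨hkK, v, hv, w, hw, hk⟩ := mem_straddled.1 hk
      refine mem_straddled.2 ⟨mem_sdiff.2 ⟨hkK, fun hkS => ?_⟩, v, hv, w, hw, hk⟩
      obtain ⟨-, _, -, w', hw', hk'⟩ := mem_straddled.1 hkS
      exact (hk.1.trans hk'.2).not_ge (hlow w' hw' v (hU hv))
    have hUK := (Nat.mul_le_mul_left m (card_le_card hdisj)).trans hUK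
    rw [card_sdiff_of_subset hSK, Nat.le_sub_iff_add_le (card_le_card hSK)] at hUK
    refine le_of_mul_le_mul_left ?_ hm
    nlinarith

end Windows

section DualCurves

variable {s s' : ℝ} {i i' : (ℝ × ℝ) × ℝ}

/-- `dualCurve (a, d) s` is the intercept of the line with slope `s` at signed distance `d` from the
point `a`; the sign is positive for lines below `a`. -/
def dualCurve (i : (ℝ × ℝ) × ℝ) (s : ℝ) : ℝ := i.1.2 - s * i.1.1 - i.2 * √(1 + s ^ 2)

/-- The slope of the lines orthogonal to the line through the two given points. -/
def perpSlope (k : (ℝ × ℝ) × (ℝ × ℝ)) : ℝ := -(k.1.1 - k.2.1) / (k.1.2 - k.2.2)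

lemma continuous_dualCurve (i : (ℝ × ℝ) × ℝ) : Continuous (dualCurve i) := by
  unfold dualCurve
  fun_prop

lemma dualCurve_eq_iff :
    dualCurve i s = dualCurve i' s ↔
      ((i.1.2 - i'.1.2) - s * (i.1.1 - i'.1.1)) / √(1 + s ^ 2) = i.2 - i'.2 := by
  rw [div_eq_iff (by positivity), dualCurve, dualCurve]
  constructor <;> intro h <;> linarith

lemma eq_of_dualCurve_eq (hi : i.1 = i'.1) (h : dualCurve i s = dualCurve i' s) : i = i' := by
  rw [dualCurve_eq_iff, hi, sub_self, sub_self, mul_zero, sub_zero, zero_div] at h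
  exact Prod.ext hi (sub_eq_zero.1 h.symm)

lemma hasDerivAt_sub_mul_div_sqrt (b c s : ℝ) :
    HasDerivAt (fun s => (c - s * b) / √(1 + s ^ 2)) (-(b + c * s) / √(1 + s ^ 2) ^ 3) s := by
  have hsqrt : HasDerivAt (fun s : ℝ => √(1 + s ^ 2)) (2 * s / (2 * √(1 + s ^ 2))) s := by
    refine HasDerivAt.sqrt ?_ (by positivity)
    simpa using (hasDerivAt_pow 2 s).const_add 1
  have hpos : √(1 + s ^ 2) ≠ 0 := by positivity
  refine ((((hasDerivAt_id s).mul_const b).const_sub c).div hsqrt hpos).congr_deriv ?_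
  have hsq : √(1 + s ^ 2) ^ 2 = 1 + s ^ 2 := Real.sq_sqrt (by positivity)
  field_simp
  rw [hsq]
  simp only [id]
  ring

/-- By Rolle's theorem, the derivative of the difference of the two curves, divided by
`√(1 + s ^ 2)`, has a zero between `s` and `s'`; it vanishes only at the perpendicular slope. -/
lemma perpSlope_mem_Ioo (hi : i ≠ i') (hs : s < s') (h : dualCurve i s = dualCurve i' s)
    (h' : dualCurve i s' = dualCurve i' s') : perpSlope (i.1, i'.1) ∈ Set.Ioo s s' := by
  have hderiv := hasDerivAt_sub_mul_div_sqrt (i.1.1 - i'.1.1) (i.1.2 - i'.1.2)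
  obtain ⟨t, ht, hzero⟩ := exists_hasDerivAt_eq_zero hs
    (fun t _ => (hderiv t).continuousAt.continuousWithinAt)
    ((dualCurve_eq_iff.1 h).trans (dualCurve_eq_iff.1 h').symm) fun t _ => hderiv t
  rw [div_eq_zero_iff, or_iff_left (by positivity), neg_eq_zero] at hzero
  have hb : i.1.2 - i'.1.2 ≠ 0 := fun hb => by
    rw [hb, zero_mul, add_zero] at hzero
    exact hi (eq_of_dualCurve_eq (Prod.ext (sub_eq_zero.1 hzero) (sub_eq_zero.1 hb)) h)
  have hκ : perpSlope (i.1, i'.1) = t := by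
    rw [perpSlope, div_eq_iff hb]
    linarith
  rwa [hκ]

lemma encard_setOf_dualCurve_eq_le_two (hi : i ≠ i') :
    {s | dualCurve i s = dualCurve i' s}.encard ≤ 2 := by
  set S := {s | dualCurve i s = dualCurve i' s}
  set κ := perpSlope (i.1, i'.1)
  have hκ {s s'} (hs : s ∈ S) (hs' : s' ∈ S) (hlt : s < s') : κ ∈ Set.Ioo s s' :=
    perpSlope_mem_Ioo hi hlt hs hs'
  have hleft : (S ∩ Set.Iic κ).Subsingleton := by
    intro s hs s' hs'
    by_contra hne
    rcases lt_or_gt_of_ne hne with hlt | hlt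
    · exact (hκ hs.1 hs'.1 hlt).2.not_ge hs'.2
    · exact (hκ hs'.1 hs.1 hlt).2.not_ge hs.2
  have hright : (S \ Set.Iic κ).Subsingleton := by
    intro s hs s' hs'
    by_contra hne
    rcases lt_or_gt_of_ne hne with hlt | hlt
    · exact hs.2 (hκ hs.1 hs'.1 hlt).1.le
    · exact hs'.2 (hκ hs'.1 hs.1 hlt).1.le
  rw [← Set.encard_sdiff_add_encard_inter S (Set.Iic κ), ← one_add_one_eq_two]
  exact add_le_add (Set.encard_le_one_iff_subsingleton.2 hright)
    (Set.encard_le_one_iff_subsingleton.2 hleft)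

end DualCurves

section DualArcs

open ArcFamily

variable {A V : Finset (ℝ × ℝ)} {Δ : Finset ℝ} {e e' : ((ℝ × ℝ) × ℝ) × (ℝ × ℝ) × (ℝ × ℝ)}

/-- The arcs that join consecutive points of `V` on the curves `dualCurve (a, d)` with `a ∈ A` and
`d ∈ Δ`. -/
def dualArcs (A : Finset (ℝ × ℝ)) (Δ : Finset ℝ) (V : Finset (ℝ × ℝ)) :
    Finset (((ℝ × ℝ) × ℝ) × (ℝ × ℝ) × (ℝ × ℝ)) :=
  consecutiveArcs V (A ×ˢ Δ) dualCurve

open scoped Classical in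
/-- The arcs in `dualArcs A Δ V` with the same endpoints as another one. -/
def parallelArcs (A : Finset (ℝ × ℝ)) (Δ : Finset ℝ) (V : Finset (ℝ × ℝ)) :
    Finset (((ℝ × ℝ) × ℝ) × (ℝ × ℝ) × (ℝ × ℝ)) :=
  {e ∈ dualArcs A Δ V | ∃ e' ∈ dualArcs A Δ V, e ≠ e' ∧ e.2 = e'.2}

lemma isDrawing_dualArcs (A : Finset (ℝ × ℝ)) (Δ : Finset ℝ) (V : Finset (ℝ × ℝ)) :
    (graphArcs dualCurve).IsDrawing V (dualArcs A Δ V) :=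
  isDrawing_consecutiveArcs fun i _ => continuous_dualCurve i

lemma fst_fst_mem_of_mem_dualArcs (he : e ∈ dualArcs A Δ V) : e.1.1 ∈ A :=
  (mem_product.1 (fst_mem_of_mem_consecutiveArcs he)).1

lemma dualCurve_left (he : e ∈ dualArcs A Δ V) : dualCurve e.1 e.2.1.1 = e.2.1.2 :=
  (isDrawing_dualArcs A Δ V).curve_left e he

lemma dualCurve_right (he : e ∈ dualArcs A Δ V) : dualCurve e.1 e.2.2.1 = e.2.2.2 :=
  (isDrawing_dualArcs A Δ V).curve_right e he

lemma eq_of_left_eq (he : e ∈ dualArcs A Δ V) (he' : e' ∈ dualArcs A Δ V)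
    (ha : e.1.1 = e'.1.1) (hleft : e.2.1 = e'.2.1) : e = e' := by
  have hi : e.1 = e'.1 := eq_of_dualCurve_eq ha <| by
    rw [dualCurve_left he, hleft, dualCurve_left he']
  have hlt : e.2.1.1 < e.2.2.1 := (isDrawing_dualArcs A Δ V).left_lt_right e he
  have hlt' : e'.2.1.1 < e'.2.2.1 := (isDrawing_dualArcs A Δ V).left_lt_right e' he'
  have hlt₁ : e.2.1.1 < e'.2.2.1 := hleft ▸ hlt'
  have hlt₂ : e'.2.1.1 < e.2.2.1 := hleft ▸ hlt
  obtain ⟨x, hx⟩ := span_inter_nonempty (A := graphArcs dualCurve) (e := e) (g := e')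
    (x := min e.2.2.1 e'.2.2.1) ⟨lt_min hlt hlt₁, min_le_left _ _⟩
    ⟨lt_min hlt₂ hlt', min_le_right _ _⟩
  exact eq_of_mem_span he he' hi hx

lemma eq_of_right_eq (he : e ∈ dualArcs A Δ V) (he' : e' ∈ dualArcs A Δ V)
    (ha : e.1.1 = e'.1.1) (hright : e.2.2 = e'.2.2) : e = e' := by
  have hi : e.1 = e'.1 := eq_of_dualCurve_eq ha <| by
    rw [dualCurve_right he, hright, dualCurve_right he']
  have hlt : e.2.1.1 < e.2.2.1 := (isDrawing_dualArcs A Δ V).left_lt_right e he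
  have hlt' : e'.2.1.1 < e'.2.2.1 := (isDrawing_dualArcs A Δ V).left_lt_right e' he'
  obtain ⟨x, hx⟩ := span_inter_nonempty (A := graphArcs dualCurve) (e := e) (g := e')
    ⟨hlt, le_rfl⟩ ⟨hright ▸ hlt', hright ▸ le_rfl⟩
  exact eq_of_mem_span he he' hi hx

lemma perpSlope_mem_span (he : e ∈ dualArcs A Δ V) (he' : e' ∈ dualArcs A Δ V) (hne : e ≠ e')
    (hends : e.2 = e'.2) : perpSlope (e.1.1, e'.1.1) ∈ (graphArcs dualCurve).span e := by
  refine perpSlope_mem_Ioo (fun hi => hne (Prod.ext hi hends))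
    ((isDrawing_dualArcs A Δ V).left_lt_right e he) ?_ ?_
  · change dualCurve e.1 e.2.1.1 = dualCurve e'.1 e.2.1.1
    rw [dualCurve_left he, hends, dualCurve_left he']
  · change dualCurve e.1 e.2.2.1 = dualCurve e'.1 e.2.2.1
    rw [dualCurve_right he, hends, dualCurve_right he']

lemma card_parallelArcs_le (A : Finset (ℝ × ℝ)) (Δ : Finset ℝ) (V : Finset (ℝ × ℝ)) :
    #(parallelArcs A Δ V) ≤ #A ^ 2 * #Δ := by
  have hpartner : ∀ e ∈ parallelArcs A Δ V, ∃ a' ∈ A,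
      perpSlope (e.1.1, a') ∈ (graphArcs dualCurve).span e := fun e he => by
    obtain ⟨he, e', he', hne, hends⟩ := mem_filter.1 he
    exact ⟨e'.1.1, fst_fst_mem_of_mem_dualArcs he', perpSlope_mem_span he he' hne hends⟩
  choose! f hfA hf using hpartner
  rw [show #A ^ 2 * #Δ = #((A ×ˢ Δ) ×ˢ A) by rw [card_product, card_product]; ring]
  refine card_le_card_of_injOn (fun e => (e.1, f e)) (fun e he => ?_) fun e he e' he' hee => ?_
  · exact mk_mem_product (fst_mem_of_mem_consecutiveArcs (mem_filter.1 he).1) (hfA e he)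
  · obtain ⟨hi, hfe⟩ := Prod.mk.inj hee
    refine eq_of_mem_span (mem_filter.1 he).1 (mem_filter.1 he').1 hi ⟨hf e he, ?_⟩
    rw [hi, hfe]
    exact hf e' he'

lemma simple_sdiff_parallelArcs (A : Finset (ℝ × ℝ)) (Δ : Finset ℝ) (V : Finset (ℝ × ℝ)) :
    (graphArcs dualCurve).Simple (dualArcs A Δ V \ parallelArcs A Δ V) := by
  intro e he e' he' hends
  obtain ⟨he, hpar⟩ := mem_sdiff.1 he
  by_contra hne
  exact hpar (mem_filter.2 ⟨he, e', (mem_sdiff.1 he').1, hne, hends⟩)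

lemma perpSlope_mem_span_of_cross (he : e ∈ dualArcs A Δ V) (he' : e' ∈ dualArcs A Δ V)
    (hc : (graphArcs dualCurve).Cross e e') (ha : (graphArcs dualCurve).Adjacent e e') :
    perpSlope (e.1.1, e'.1.1) ∈ (graphArcs dualCurve).span e := by
  have hi := hc.fst_ne he he'
  obtain ⟨-, x, ⟨hx, -⟩, hagree⟩ := hc
  rcases ha with hleft | hright
  · change e.2.1 = e'.2.1 at hleft
    have hu : dualCurve e.1 e.2.1.1 = dualCurve e'.1 e.2.1.1 := by
      rw [dualCurve_left he, hleft, dualCurve_left he']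
    have hκ := perpSlope_mem_Ioo hi hx.1 hu hagree
    exact ⟨hκ.1, hκ.2.trans hx.2⟩
  · change e.2.2 = e'.2.2 at hright
    have hw : dualCurve e.1 e.2.2.1 = dualCurve e'.1 e.2.2.1 := by
      rw [dualCurve_right he, hright, dualCurve_right he']
    have hκ := perpSlope_mem_Ioo hi hx.2 hagree hw
    exact ⟨hx.1.trans hκ.1, hκ.2⟩

open scoped Classical in
lemma card_filter_adjacentCrossings_le {E : Finset (((ℝ × ℝ) × ℝ) × (ℝ × ℝ) × (ℝ × ℝ))}
    (hE : E ⊆ dualArcs A Δ V) (q : ((ℝ × ℝ) × ℝ) × (ℝ × ℝ) × (ℝ × ℝ) → ℝ × ℝ)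
    (hqV : ∀ e ∈ dualArcs A Δ V, q e ∈ V)
    (hq : ∀ e ∈ dualArcs A Δ V, ∀ e' ∈ dualArcs A Δ V, e.1.1 = e'.1.1 → q e = q e' → e = e') :
    #{c ∈ (graphArcs dualCurve).adjacentCrossings E | q c.1 = q c.2} ≤
      #V * #(straddled (A ×ˢ A) perpSlope Prod.fst V) := by
  have hmem : ∀ c ∈ (graphArcs dualCurve).adjacentCrossings E,
      c.1 ∈ dualArcs A Δ V ∧ c.2 ∈ dualArcs A Δ V ∧
        perpSlope (c.1.1.1, c.2.1.1) ∈ (graphArcs dualCurve).span c.1 := fun c hc => by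
    obtain ⟨hc, ha⟩ := mem_filter.1 hc
    obtain ⟨he, he', hc⟩ := mem_crossings.1 hc
    exact ⟨hE he, hE he', perpSlope_mem_span_of_cross (hE he) (hE he') hc ha⟩
  rw [← card_product]
  refine card_le_card_of_injOn (fun c => (q c.1, (c.1.1.1, c.2.1.1))) (fun c hc => ?_) ?_
  · obtain ⟨he, he', hκ⟩ := hmem c (mem_filter.1 hc).1
    have hends := mem_consecutiveArcs.1 he
    exact mk_mem_product (hqV c.1 he) <| mem_straddled.2
      ⟨mk_mem_product (fst_fst_mem_of_mem_dualArcs he) (fst_fst_mem_of_mem_dualArcs he'),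
        c.1.2.1, hends.2.1, c.1.2.2, hends.2.2.1, hκ⟩
  · intro c hc d hd hcd
    obtain ⟨hc, hqc⟩ := mem_filter.1 hc
    obtain ⟨hd, hqd⟩ := mem_filter.1 hd
    obtain ⟨hce, hce', -⟩ := hmem c hc
    obtain ⟨hde, hde', -⟩ := hmem d hd
    obtain ⟨hqcd, ha⟩ := Prod.mk.inj hcd
    obtain ⟨ha, ha'⟩ := Prod.mk.inj ha
    exact Prod.ext (hq _ hce _ hde ha hqcd)
      (hq _ hce' _ hde' ha' (hqc.symm.trans (hqcd.trans hqd)))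

lemma card_adjacentCrossings_le {E : Finset (((ℝ × ℝ) × ℝ) × (ℝ × ℝ) × (ℝ × ℝ))}
    (hE : E ⊆ dualArcs A Δ V) :
    #((graphArcs dualCurve).adjacentCrossings E) ≤
      2 * (#V * #(straddled (A ×ˢ A) perpSlope Prod.fst V)) := by
  classical
  have hD := isDrawing_dualArcs A Δ V
  have hleft := card_filter_adjacentCrossings_le hE (fun e => e.2.1) hD.left_mem
    fun _ he _ he' => eq_of_left_eq he he'
  have hright := card_filter_adjacentCrossings_le hE (fun e => e.2.2) hD.right_mem
    fun _ he _ he' => eq_of_right_eq he he'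
  have hcover : (graphArcs dualCurve).adjacentCrossings E ⊆
      {c ∈ (graphArcs dualCurve).adjacentCrossings E | c.1.2.1 = c.2.2.1} ∪
        {c ∈ (graphArcs dualCurve).adjacentCrossings E | c.1.2.2 = c.2.2.2} := fun c hc =>
    mem_union.2 <| (mem_filter.1 hc).2.imp (fun h => mem_filter.2 ⟨hc, h⟩)
      fun h => mem_filter.2 ⟨hc, h⟩
  have := (card_le_card hcover).trans (card_union_le _ _)
  lia

variable {V₀ : Finset (ℝ × ℝ)} {r : ℕ}

lemma card_mul_card_le_card_incidences (h : ∀ a ∈ A, ∀ v ∈ V, ∃ d ∈ Δ, dualCurve (a, d) v.1 = v.2) :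
    #A * #V ≤ #(incidences V (A ×ˢ Δ) dualCurve) := by
  choose! d hd hv using h
  rw [← card_product]
  refine card_le_card_of_injOn (fun q => ((q.1, d q.1 q.2), q.2)) (fun q hq => ?_) ?_
  · obtain ⟨ha, hv'⟩ := mem_product.1 hq
    exact mem_incidences.2 ⟨mk_mem_product ha (hd _ ha _ hv'), hv', hv _ ha _ hv'⟩
  · intro q _ q' _ hqq
    simp only [Prod.mk.injEq] at hqq
    exact Prod.ext hqq.1.1 hqq.2

lemma card_mul_card_le_card_sdiff_parallelArcs (hΔ : 2 * (#A + 1) * #Δ ≤ #V)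
    (h : ∀ a ∈ A, ∀ v ∈ V, ∃ d ∈ Δ, dualCurve (a, d) v.1 = v.2) :
    #A * #V ≤ 2 * #(dualArcs A Δ V \ parallelArcs A Δ V) := by
  have hinc := card_mul_card_le_card_incidences h
  have hadd : #(incidences V (A ×ˢ Δ) dualCurve) ≤ #(dualArcs A Δ V) + #A * #Δ := by
    rw [← card_product]
    exact card_incidences_le_add V (A ×ˢ Δ) dualCurve
  have hpar := card_parallelArcs_le A Δ V
  have hsdiff : #(dualArcs A Δ V) ≤
      #(dualArcs A Δ V \ parallelArcs A Δ V) + #(parallelArcs A Δ V) :=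
    Nat.sub_le_iff_le_add.1 (le_card_sdiff _ _)
  have := Nat.mul_le_mul_left #A hΔ
  linarith

lemma mul_le_of_crossing_inequality {a v d m x y : ℝ} (ha : 0 < a) (hm : a * v ≤ 2 * m)
    (hx : 96 * x ≤ v * a ^ 2) (hy : y ≤ 2 * (a * d) ^ 2)
    (h : m * (12 / a) ^ 2 ≤ 3 * (v * (12 / a)) + x * (12 / a) ^ 3 + y * (12 / a) ^ 4) :
    v * a ≤ 2304 * d ^ 2 := by
  have hexpand : 144 * m ≤ 36 * (a * v) + 1728 * (x / a) + 20736 * (y / a ^ 2) := by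
    have := mul_le_mul_of_nonneg_right h (sq_nonneg a)
    field_simp at this ⊢
    linarith
  have hx' : x / a ≤ a * v / 96 := by
    rw [div_le_iff₀ ha]
    linarith
  have hy' : y / a ^ 2 ≤ 2 * d ^ 2 := by
    rw [div_le_iff₀ (by positivity)]
    linarith
  linarith

/-- The crossing inequality with sampling probability `12 / #A`, applied to the arcs between the
points of a window that straddles at most `#A ^ 2 / 192` perpendicular slopes. -/
theorem card_mul_card_le_of_forall_exists_dualCurve_eq (hA : 12 ≤ #A) (hr : 192 * r ≤ #V₀)
    (hΔ : 2 * (#A + 1) * #Δ ≤ r)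
    (h : ∀ a ∈ A, ∀ v ∈ V₀, ∃ d ∈ Δ, dualCurve (a, d) v.1 = v.2) :
    r * #A ≤ 2304 * #Δ ^ 2 := by
  obtain ⟨V, hV, rfl, hκ⟩ := exists_subset_card_straddled_le (K := A ×ˢ A) (κ := perpSlope)
    (x := Prod.fst) (by norm_num : 1 ≤ 192) hr
  set E := dualArcs A Δ V \ parallelArcs A Δ V
  have hE : E ⊆ dualArcs A Δ V := sdiff_subset
  have harcs : #A * #V ≤ 2 * #E :=
    card_mul_card_le_card_sdiff_parallelArcs hΔ fun a ha v hv => h a ha v (hV hv)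
  have hadj : 96 * #((graphArcs dualCurve).adjacentCrossings E) ≤ #V * #A ^ 2 := by
    rw [card_product, ← sq] at hκ
    nlinarith [card_adjacentCrossings_le hE]
  have hcr : #((graphArcs dualCurve).crossings E) ≤ 2 * (#A * #Δ) ^ 2 := by
    rw [← card_product]
    exact card_crossings_le hE fun i _ i' _ => encard_setOf_dualCurve_eq_le_two
  have hA' : (12 : ℝ) ≤ #A := by exact_mod_cast hA
  have hD := isDrawing_dualArcs A Δ V
  have hineq := (hD.mono hE subset_rfl (fun e he => hD.left_mem e (hE he))
    fun e he => hD.right_mem e (hE he)).crossing_inequality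
    (simple_sdiff_parallelArcs A Δ V) (p := 12 / #A) (by positivity)
    ((div_le_one (by positivity)).2 hA')
  have := mul_le_of_crossing_inequality (d := #Δ) (by positivity) (by exact_mod_cast harcs)
    (by exact_mod_cast hadj) (by exact_mod_cast hcr) hineq
  exact_mod_cast this

end DualArcs

section Plane

variable {P H : Finset (ℝ × ℝ)} {Δ : Finset ℝ} {p x y n : ℝ × ℝ} {c : ℝ}

/-- The signed distance from `a` to the line through `b` and `e`, oriented from `b` to `e`; it is
positive to the right of the line. -/
def signedLineDist (a b e : ℝ × ℝ) : ℝ :=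
  ((a.1 - b.1) * (e.2 - b.2) - (a.2 - b.2) * (e.1 - b.1)) / √((e.1 - b.1) ^ 2 + (e.2 - b.2) ^ 2)

lemma sq_add_sq_pos (hn : n ≠ 0) : 0 < n.1 ^ 2 + n.2 ^ 2 := by
  rcases not_and_or.1 (mt Prod.ext_iff.2 hn) with h | h
  · have : n.1 ≠ 0 := h
    positivity
  · have : n.2 ≠ 0 := h
    positivity

/-- The coordinates of `x` and `y` along their common line, with the foot of the perpendicular from
`p` as origin, are the arguments of `axisDist`. -/
lemma signedLineDist_eq_mul_axisDist (hn : n ≠ 0) (hx : n.1 * x.1 + n.2 * x.2 = c)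
    (hy : n.1 * y.1 + n.2 * y.2 = c) :
    signedLineDist y p x = (n.1 * p.1 + n.2 * p.2 - c) / √(n.1 ^ 2 + n.2 ^ 2) *
      axisDist (n.1 * p.1 + n.2 * p.2 - c) (n.1 * (x.2 - p.2) - n.2 * (x.1 - p.1))
        (n.1 * (y.2 - p.2) - n.2 * (y.1 - p.1)) := by
  have hN := sq_add_sq_pos hn
  have hdenom : (n.1 * p.1 + n.2 * p.2 - c) ^ 2 + (n.1 * (x.2 - p.2) - n.2 * (x.1 - p.1)) ^ 2 =
      (n.1 ^ 2 + n.2 ^ 2) * ((x.1 - p.1) ^ 2 + (x.2 - p.2) ^ 2) := by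
    rw [← hx]
    ring
  have hnum : (n.1 ^ 2 + n.2 ^ 2) *
        ((y.1 - p.1) * (x.2 - p.2) - (y.2 - p.2) * (x.1 - p.1)) =
      (n.1 * p.1 + n.2 * p.2 - c) * ((n.1 * (y.2 - p.2) - n.2 * (y.1 - p.1)) -
        (n.1 * (x.2 - p.2) - n.2 * (x.1 - p.1))) := by
    linear_combination (n.1 * (x.2 - p.2) - n.2 * (x.1 - p.1)) * hy -
      (n.1 * (y.2 - p.2) - n.2 * (y.1 - p.1)) * hx
  rw [axisDist, signedLineDist, hdenom, Real.sqrt_mul hN.le, div_mul_div_comm, ← hnum, ← mul_assoc,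
    Real.mul_self_sqrt hN.le, mul_div_mul_left _ _ hN.ne']

lemma card_rpow_le_of_collinear (hΔ : ∀ y ∈ P, ∀ p ∈ P, ∀ x ∈ P, p ≠ x → signedLineDist y p x ∈ Δ)
    (hn : n ≠ 0) (hp : p ∈ P) (hpc : n.1 * p.1 + n.2 * p.2 ≠ c) (hH : H ⊆ P)
    (hl : ∀ x ∈ H, n.1 * x.1 + n.2 * x.2 = c) : (#H : ℝ) ^ ((4 : ℝ) / 3) ≤ 13 * #Δ := by
  have hh : n.1 * p.1 + n.2 * p.2 - c ≠ 0 := sub_ne_zero.2 hpc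
  have hN := sq_add_sq_pos hn
  set h := n.1 * p.1 + n.2 * p.2 - c
  set κ := h / √(n.1 ^ 2 + n.2 ^ 2)
  let t : ℝ × ℝ → ℝ := fun x => n.1 * (x.2 - p.2) - n.2 * (x.1 - p.1)
  have ht : Set.InjOn t H := fun x hx y hy hxy => by
    have h1 : (n.1 ^ 2 + n.2 ^ 2) * x.1 = (n.1 ^ 2 + n.2 ^ 2) * y.1 := by
      linear_combination n.1 * (hl x hx) - n.1 * (hl y hy) - n.2 * hxy
    have h2 : (n.1 ^ 2 + n.2 ^ 2) * x.2 = (n.1 ^ 2 + n.2 ^ 2) * y.2 := by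
      linear_combination n.2 * (hl x hx) - n.2 * (hl y hy) + n.1 * hxy
    exact Prod.ext (mul_left_cancel₀ hN.ne' h1) (mul_left_cancel₀ hN.ne' h2)
  have hmem : ∀ u ∈ H.image t, ∀ v ∈ H.image t, axisDist h u v ∈ Δ.image (· / κ) := by
    simp only [forall_mem_image]
    intro x hx y hy
    have hpx : p ≠ x := by rintro rfl; exact hpc (hl p hx)
    refine mem_image.2 ⟨_, hΔ y (hH hy) p hp x (hH hx) hpx, ?_⟩
    rw [signedLineDist_eq_mul_axisDist hn (hl x hx) (hl y hy)]
    exact mul_div_cancel_left₀ _ (div_ne_zero hh (by positivity))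
  rw [← card_image_of_injOn ht]
  have hcard : (#(Δ.image (· / κ)) : ℝ) ≤ #Δ := by exact_mod_cast card_image_le
  linarith [card_rpow_le_of_axisDist_mem hh hmem]

lemma signedLineDist_of_lineFun_eq {b e l : ℝ × ℝ} (hbe : e.1 < b.1) (hb : lineFun l b.1 = b.2)
    (he : lineFun l e.1 = e.2) (a : ℝ × ℝ) :
    signedLineDist a b e = (a.2 - l.1 * a.1 - l.2) / √(1 + l.1 ^ 2) := by
  rw [lineFun] at hb he
  have hpos : 0 < b.1 - e.1 := sub_pos.2 hbe
  have hdenom : (e.1 - b.1) ^ 2 + (e.2 - b.2) ^ 2 = (b.1 - e.1) ^ 2 * (1 + l.1 ^ 2) := by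
    rw [← hb, ← he]
    ring
  have hnum : (a.1 - b.1) * (e.2 - b.2) - (a.2 - b.2) * (e.1 - b.1) =
      (b.1 - e.1) * (a.2 - l.1 * a.1 - l.2) := by
    rw [← hb, ← he]
    ring
  rw [signedLineDist, hdenom, hnum, Real.sqrt_mul (sq_nonneg _), Real.sqrt_sq hpos.le,
    mul_div_mul_left _ _ hpos.ne']

lemma dualCurve_div_sqrt (a l : ℝ × ℝ) :
    dualCurve (a, (a.2 - l.1 * a.1 - l.2) / √(1 + l.1 ^ 2)) l.1 = l.2 := by
  rw [dualCurve, div_mul_cancel₀ _ (by positivity)]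
  ring

lemma exists_mem_dualCurve_eq
    (hΔ : ∀ a ∈ P, ∀ b ∈ P, ∀ e ∈ P, b ≠ e → signedLineDist a b e ∈ Δ) :
    ∀ a ∈ P, ∀ l ∈ spannedLines P, ∃ d ∈ Δ, dualCurve (a, d) l.1 = l.2 := by
  intro a ha l hl
  obtain ⟨⟨p, q⟩, hpq, rfl⟩ := mem_image.1 hl
  obtain ⟨hpq, hne⟩ := mem_filter.1 hpq
  obtain ⟨hp, hq⟩ := mem_product.1 hpq
  have hleft := lineFun_lineOf_left p q
  have hright := lineFun_lineOf_right hne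
  refine ⟨_, ?_, dualCurve_div_sqrt a (lineOf p q)⟩
  rcases lt_or_gt_of_ne hne with hlt | hlt
  · rw [← signedLineDist_of_lineFun_eq hlt hright hleft a]
    exact hΔ a ha q hq p hp (ne_of_apply_ne Prod.fst hlt.ne')
  · rw [← signedLineDist_of_lineFun_eq hlt hleft hright a]
    exact hΔ a ha p hp q hq (ne_of_apply_ne Prod.fst hlt.ne')

lemma sample_size_bounds {y : ℝ} {d n : ℕ} (hy : 0 ≤ y) (hd : 1 ≤ d) (hn : y ^ 3 ≤ 2 ^ 34 * n)
    (hdy : 2 ^ 45 * d < y ^ 2) :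
    12 ≤ ⌊y⌋₊ ∧ 2 * (⌊y⌋₊ + 1) * d ≤ n / 192 ∧ 2304 * d ^ 2 < n / 192 * ⌊y⌋₊ := by
  have hd' : (1 : ℝ) ≤ d := by exact_mod_cast hd
  have hy22 : (2 : ℝ) ^ 22 ≤ y := le_of_sq_le_sq (by linarith) hy
  set a := ⌊y⌋₊
  set r := n / 192
  have ha : (a : ℝ) ≤ y := Nat.floor_le hy
  have ha' : y < a + 1 := Nat.lt_floor_add_one y
  have hr : y ^ 3 ≤ 2 ^ 43 * r := by
    have hnr : (n : ℝ) ≤ 192 * (r + 1) := by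
      exact_mod_cast (Nat.lt_mul_div_succ n (by norm_num : 0 < 192)).le
    have : ((2 : ℝ) ^ 22) ^ 3 ≤ y ^ 3 := by gcongr
    linarith
  have hdy3 : 2 ^ 45 * d * y ≤ y ^ 3 :=
    (mul_le_mul_of_nonneg_right hdy.le hy).trans_eq (by ring)
  refine ⟨Nat.le_floor (by push_cast; linarith), ?_, ?_⟩
  · have hady : (a + 1) * d ≤ 2 * y * d := by gcongr; linarith
    have : (2 * (a + 1) * d : ℝ) ≤ r := by linarith
    exact_mod_cast this
  · have hra : y ^ 3 * (y / 2) ≤ 2 ^ 43 * r * a := by gcongr; linarith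
    have hd2 : (2 ^ 45 * d : ℝ) ^ 2 < (y ^ 2) ^ 2 := by gcongr
    have : (2304 * d ^ 2 : ℝ) < r * a := by linarith [sq_nonneg (d : ℝ)]
    exact_mod_cast this

/-- Applies the bound for dual curves to `⌊#P ^ (2 / 3)⌋` of the points. -/
lemma card_rpow_le_of_card_sq_le_card_spannedLines (hΔ₀ : Δ.Nonempty)
    (hΔ : ∀ a ∈ P, ∀ b ∈ P, ∀ e ∈ P, b ≠ e → signedLineDist a b e ∈ Δ)
    (hP : #P ^ 2 ≤ 2 ^ 34 * #(spannedLines P)) : (#P : ℝ) ^ ((4 : ℝ) / 3) ≤ 2 ^ 45 * #Δ := by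
  obtain ⟨x, hx, hxP⟩ := exists_pow_three_eq (Nat.cast_nonneg (α := ℝ) #P)
  have hroot : (#P : ℝ) ^ ((4 : ℝ) / 3) = (x ^ 2) ^ 2 := by
    rw [← hxP, ← pow_mul]
    exact_mod_cast pow_three_rpow_div_three hx 4
  have hlines : (x ^ 2) ^ 3 ≤ 2 ^ 34 * #(spannedLines P) := by
    have : (#P : ℝ) ^ 2 ≤ 2 ^ 34 * #(spannedLines P) := by exact_mod_cast hP
    exact (by rw [← hxP]; ring : (x ^ 2) ^ 3 = (#P : ℝ) ^ 2).trans_le this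
  rw [hroot]
  by_contra! hlt
  obtain ⟨ha, hr, hra⟩ := sample_size_bounds (sq_nonneg x) hΔ₀.card_pos hlines hlt
  have haP : ⌊x ^ 2⌋₊ ≤ #P := by
    have hx1 : 1 ≤ x := le_of_not_gt fun hx1 => by
      rw [Nat.floor_eq_zero.2 (pow_lt_one₀ hx hx1 two_ne_zero)] at ha
      contradiction
    refine Nat.floor_le_of_le ?_
    rw [← hxP]
    exact pow_le_pow_right₀ hx1 (by norm_num)
  obtain ⟨A, hA, hAcard⟩ := exists_subset_card_eq haP
  rw [← hAcard] at ha hr hra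
  exact hra.not_ge <| card_mul_card_le_of_forall_exists_dualCurve_eq ha (Nat.mul_div_le _ _) hr
    fun a ha => exists_mem_dualCurve_eq hΔ a (hA ha)

lemma rpow_four_thirds_le_of_le_mul {m k : ℝ} (hm : 0 ≤ m) (h : m ≤ 256 * k) :
    m ^ ((4 : ℝ) / 3) ≤ 2 ^ 16 * k ^ ((4 : ℝ) / 3) := by
  have hk : 0 ≤ k := by linarith
  have hpow : (256 : ℝ) ^ ((4 : ℝ) / 3) ≤ 256 ^ (2 : ℝ) :=
    Real.rpow_le_rpow_of_exponent_le (by norm_num) (by norm_num)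
  calc m ^ ((4 : ℝ) / 3) ≤ (256 * k) ^ ((4 : ℝ) / 3) := Real.rpow_le_rpow hm h (by norm_num)
    _ = 256 ^ ((4 : ℝ) / 3) * k ^ ((4 : ℝ) / 3) := Real.mul_rpow (by norm_num) hk
    _ ≤ 256 ^ (2 : ℝ) * k ^ ((4 : ℝ) / 3) := by gcongr
    _ = 2 ^ 16 * k ^ ((4 : ℝ) / 3) := by norm_num

/-- Either some line contains a constant proportion of the points, or, by Beck's theorem, the points
span quadratically many lines. -/
theorem card_rpow_le_of_signedLineDist_mem
    (hP : ∀ n : ℝ × ℝ, n ≠ 0 → ∀ c, ∃ p ∈ P, n.1 * p.1 + n.2 * p.2 ≠ c)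
    (hΔ : ∀ a ∈ P, ∀ b ∈ P, ∀ e ∈ P, b ≠ e → signedLineDist a b e ∈ Δ) :
    (#P : ℝ) ^ ((4 : ℝ) / 3) ≤ 2 ^ 45 * #Δ := by
  have hheavy {n : ℝ × ℝ} (hn : n ≠ 0) (c : ℝ) {H : Finset (ℝ × ℝ)} (hH : H ⊆ P)
      (hl : ∀ x ∈ H, n.1 * x.1 + n.2 * x.2 = c) (hcard : #P ≤ 256 * #H) :
      (#P : ℝ) ^ ((4 : ℝ) / 3) ≤ 2 ^ 45 * #Δ := by
    obtain ⟨p, hp, hpc⟩ := hP n hn c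
    have := rpow_four_thirds_le_of_le_mul (Nat.cast_nonneg #P)
      (by exact_mod_cast hcard : (#P : ℝ) ≤ 256 * #H)
    linarith [card_rpow_le_of_collinear hΔ hn hp hpc hH hl]
  by_cases hl : ∀ l, 256 * #(pointsOn P l) ≤ #P
  swap
  · push Not at hl
    obtain ⟨l, hl⟩ := hl
    refine hheavy (n := (-l.1, 1)) (by simp) l.2 (filter_subset _ _) (fun x hx => ?_) hl.le
    rw [← (mem_pointsOn.1 hx).2, lineFun]
    ring
  by_cases hv : ∀ x, 2 * #{p ∈ P | p.1 = x} ≤ #P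
  swap
  · push Not at hv
    obtain ⟨x, hx⟩ := hv
    refine hheavy (n := (1, 0)) (by simp) x (filter_subset _ P) (fun y hy => ?_)
      (hx.le.trans (by gcongr; norm_num))
    rw [one_mul, zero_mul, add_zero, (mem_filter.1 hy).2]
  refine card_rpow_le_of_card_sq_le_card_spannedLines ?_ hΔ (card_sq_le_card_spannedLines hl hv)
  obtain ⟨p, hp, -⟩ := hP (1, 0) (by simp) 0
  obtain ⟨q, hq, hpq⟩ := hP (1, 0) (by simp) p.1
  exact ⟨_, hΔ p hp p hp q hq (by rintro rfl; simp at hpq)⟩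

end Plane

section Coordinates

/-- The coordinate pair of a point of the plane. -/
def coords (p : Pt2) : ℝ × ℝ := (p 0, p 1)

lemma coords_injective : Function.Injective coords := by
  intro p q h
  ext i
  fin_cases i
  · exact congrArg Prod.fst h
  · exact congrArg Prod.snd h

lemma coords_add_smul (a v : Pt2) (t : ℝ) :
    coords (a + t • v) =
      ((coords a).1 + t * (coords v).1, (coords a).2 + t * (coords v).2) := rfl

lemma dist_sq_eq_coords (p q : Pt2) :
    dist p q ^ 2 = ((coords p).1 - (coords q).1) ^ 2 + ((coords p).2 - (coords q).2) ^ 2 := by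
  simp only [EuclideanSpace.dist_sq_eq, Fin.sum_univ_two, Real.dist_eq, sq_abs, coords]

lemma isLine2_setOf_add_eq {n : ℝ × ℝ} (hn : n ≠ 0) (c : ℝ) :
    IsLine2 {x | n.1 * (coords x).1 + n.2 * (coords x).2 = c} := by
  have hN := sq_add_sq_pos hn
  set N := n.1 ^ 2 + n.2 ^ 2 with hNdef
  have hv : coords !₂[-n.2, n.1] = (-n.2, n.1) := rfl
  have ha : coords !₂[n.1 * c / N, n.2 * c / N] = (n.1 * c / N, n.2 * c / N) := rfl
  refine ⟨!₂[n.1 * c / N, n.2 * c / N], !₂[-n.2, n.1], fun h => hn ?_, ?_⟩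
  · obtain ⟨h2, h1⟩ := Prod.mk.inj (hv.symm.trans (congrArg coords h))
    exact Prod.ext h1 (neg_eq_zero.1 h2)
  · ext x
    simp only [Set.mem_ofPred_eq, ← coords_injective.eq_iff (a := x), coords_add_smul, ha, hv]
    constructor
    · rintro rfl
      refine ⟨(n.1 * (coords x).2 - n.2 * (coords x).1) / N, Prod.ext ?_ ?_⟩ <;>
      · field_simp
        rw [hNdef]
        ring
    · rintro ⟨t, ht⟩
      rw [ht]
      field_simp
      rw [hNdef]
      ring

lemma exists_forall_dist_sq_eq {b e : Pt2} (hbe : b ≠ e) (a : Pt2) :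
    ∃ t₀, ∀ t : ℝ, dist a (b + t • (e - b)) ^ 2 =
      signedLineDist (coords a) (coords b) (coords e) ^ 2 + dist e b ^ 2 * (t - t₀) ^ 2 := by
  have hpos : dist e b ^ 2 ≠ 0 := pow_ne_zero _ (dist_ne_zero.2 hbe.symm)
  have hv : coords (e - b) = ((coords e).1 - (coords b).1, (coords e).2 - (coords b).2) := rfl
  rw [dist_sq_eq_coords] at *
  refine ⟨(((coords a).1 - (coords b).1) * ((coords e).1 - (coords b).1) +
    ((coords a).2 - (coords b).2) * ((coords e).2 - (coords b).2)) /
      (((coords e).1 - (coords b).1) ^ 2 + ((coords e).2 - (coords b).2) ^ 2), fun t => ?_⟩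
  rw [dist_sq_eq_coords, coords_add_smul, hv, signedLineDist, div_pow, Real.sq_sqrt (by positivity)]
  field_simp
  ring

lemma infDist_lineThrough2 {b e : Pt2} (hbe : b ≠ e) (a : Pt2) :
    Metric.infDist a (lineThrough2 b e) = |signedLineDist (coords a) (coords b) (coords e)| := by
  obtain ⟨t₀, hdist⟩ := exists_forall_dist_sq_eq hbe a
  have hmem : b + t₀ • (e - b) ∈ lineThrough2 b e := ⟨t₀, rfl⟩
  refine le_antisymm ?_ ((Metric.le_infDist ⟨_, hmem⟩).2 ?_)
  · have hfoot : dist a (b + t₀ • (e - b)) =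
        |signedLineDist (coords a) (coords b) (coords e)| := by
      rw [← sq_eq_sq₀ dist_nonneg (abs_nonneg _), hdist, sq_abs]
      ring
    exact (Metric.infDist_le_dist_of_mem hmem).trans_eq hfoot
  · rintro _ ⟨t, rfl⟩
    refine abs_le_of_sq_le_sq ?_ dist_nonneg
    rw [hdist]
    exact le_add_of_nonneg_right (by positivity)

open scoped Classical in
/-- The distances between points of `P` and lines spanned by `P`. -/
def pointLineDists (P : Finset Pt2) : Finset ℝ :=
  {t ∈ P ×ˢ P ×ˢ P | t.2.1 ≠ t.2.2}.image fun t => Metric.infDist t.1 (lineThrough2 t.2.1 t.2.2)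

lemma mem_pointLineDists {P : Finset Pt2} {d : ℝ} :
    d ∈ pointLineDists P ↔
      ∃ a ∈ P, ∃ b ∈ P, ∃ e ∈ P, b ≠ e ∧ d = Metric.infDist a (lineThrough2 b e) := by
  simp only [pointLineDists, mem_image, mem_filter, mem_product, Prod.exists]
  grind

theorem card_rpow_le_card_pointLineDists {P : Finset Pt2}
    (hP : ¬ ∃ l : Set Pt2, IsLine2 l ∧ (P : Set Pt2) ⊆ l) :
    (#P : ℝ) ^ ((4 : ℝ) / 3) ≤ 2 ^ 46 * #(pointLineDists P) := by
  have hline : ∀ n : ℝ × ℝ, n ≠ 0 → ∀ c, ∃ p ∈ P.image coords, n.1 * p.1 + n.2 * p.2 ≠ c := by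
    intro n hn c
    by_contra! hc
    exact hP ⟨_, isLine2_setOf_add_eq hn c, fun p hp => hc _ (mem_image_of_mem _ hp)⟩
  let Δ := pointLineDists P ∪ (pointLineDists P).image Neg.neg
  have hΔ : ∀ a ∈ P.image coords, ∀ b ∈ P.image coords, ∀ e ∈ P.image coords, b ≠ e →
      signedLineDist a b e ∈ Δ := by
    simp only [forall_mem_image]
    intro a ha b hb e he hbe
    have hbe : b ≠ e := ne_of_apply_ne coords hbe
    have habs : |signedLineDist (coords a) (coords b) (coords e)| ∈ pointLineDists P :=
      mem_pointLineDists.2 ⟨a, ha, b, hb, e, he, hbe, (infDist_lineThrough2 hbe a).symm⟩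
    rcases abs_choice (signedLineDist (coords a) (coords b) (coords e)) with h | h
    · exact mem_union_left _ (h ▸ habs)
    · exact mem_union_right _ (mem_image.2 ⟨_, habs, by rw [h, neg_neg]⟩)
  have hcard : (#Δ : ℝ) ≤ 2 * #(pointLineDists P) := by
    have hneg : #((pointLineDists P).image Neg.neg) ≤ #(pointLineDists P) := card_image_le
    have : #Δ ≤ #(pointLineDists P) + #((pointLineDists P).image Neg.neg) := card_union_le _ _
    exact_mod_cast (by linarith : #Δ ≤ 2 * #(pointLineDists P))
  have hmain := card_rpow_le_of_signedLineDist_mem hline hΔ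
  rw [card_image_of_injective _ coords_injective] at hmain
  linarith

end Coordinates

theorem distances_points_spanned_lines :
    ∃ c : ℝ, 0 < c ∧
      ∀ (m : ℕ) (P : Finset Pt2), P.card = m →
        (¬ ∃ l : Set Pt2, IsLine2 l ∧ (P : Set Pt2) ⊆ l) →
        c * (m : ℝ) ^ ((4 : ℝ) / 3) ≤
          (({d : ℝ | ∃ a ∈ P, ∃ b ∈ P, ∃ e ∈ P, b ≠ e ∧
              d = Metric.infDist a (lineThrough2 b e)}).ncard : ℝ) := by
  refine ⟨1 / 2 ^ 46, by positivity, fun m P hPm hP => ?_⟩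
  have hdists : {d : ℝ | ∃ a ∈ P, ∃ b ∈ P, ∃ e ∈ P, b ≠ e ∧
      d = Metric.infDist a (lineThrough2 b e)} = pointLineDists P :=
    Set.ext fun _ => mem_pointLineDists.symm
  rw [hdists, Set.ncard_coe_finset, ← hPm, one_div_mul_eq_div, div_le_iff₀' (by positivity)]
  exact card_rpow_le_card_pointLineDists hP
end
end

section
/- There exists an absolute constant A > 0 such that for every family C of n circles in ℝ² (with arbitrary radii), the number of points p ∈ ℝ² at which at least two circles of C are tangent to each other is at most A · n^{3/2}. -/
noncomputable section

/-- A circle in the plane: a metric sphere with positive radius. -/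
def IsCircle2 (s : Set Pt2) : Prop :=
  ∃ c : Pt2, ∃ r : ℝ, 0 < r ∧ s = Metric.sphere c r

/-!
Orient each circle by a sign of its radius. In a rational parametrisation of the unit circle, the
support function of an oriented circle is a quadratic polynomial `f`, and two oriented circles touch
at `p` with equal unit normals exactly when their polynomials have a common 1-jet; that 1-jet
determines `p`. So it suffices to bound the number of common 1-jets of `m` quadratic polynomials.

Lift `f` to the space curve `t ↦ (t, f(t), f'(t))`, with velocity `V + f'' ∂₂` for the contact field
`V = ∂₀ + x₂ ∂₁`. Where two distinct lifts meet, their velocities span `V` and `∂₂`, so a polynomial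
`P` vanishing on all the lifts has `∂₂ P = 0` there. If every lift meets the others more than
`2 * deg P` times, then `∂₂ P`, and hence `V P`, vanishes on all the lifts; so does
`∂₁ P = [∂₂, V] P`, and hence `∂₀ P`. Descending in degree, `P = 0`. But parameter counting gives
some `P ≠ 0` of degree `O(√m)`, so some lift meets the others only `O(√m)` times. Removing the
lifts one at a time gives `O(m^{3/2})` meeting points in total.
-/

section MvPolynomialLemmas

open MvPolynomial

variable {σ : Type*}

lemma derivation_aeval {R A : Type*} [CommSemiring R] [CommSemiring A] [Algebra R A] [Fintype σ]
    (d : Derivation R A A) (g : σ → A) (P : MvPolynomial σ R) :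
    d (aeval g P) = ∑ i, aeval g (pderiv i P) * d (g i) := by
  classical
  induction P using MvPolynomial.induction_on with
  | C c => simp
  | add P Q hP hQ => simp [hP, hQ, add_mul, Finset.sum_add_distrib]
  | mul_X P j hP =>
    simp only [map_mul, aeval_X, Derivation.leibniz, smul_eq_mul, map_add, hP, pderiv_X,
      Pi.single_apply, add_mul, Finset.sum_add_distrib, Finset.mul_sum]
    simp [mul_comm, mul_left_comm]

lemma totalDegree_pderiv_lt {R : Type*} [CommSemiring R] {i : σ} {P : MvPolynomial σ R}
    (h : pderiv i P ≠ 0) : (pderiv i P).totalDegree < P.totalDegree := by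
  obtain ⟨m, hm, hdeg⟩ := Finset.exists_mem_eq_sup (pderiv i P).support
    (support_nonempty.mpr h) fun m ↦ m.sum fun _ e ↦ e
  have hraise : m + Finsupp.single i 1 ∈ P.support := by
    rw [mem_support_iff, coeff_pderiv] at hm
    exact mem_support_iff.mpr (left_ne_zero_of_mul hm)
  have hle := le_totalDegree hraise
  rw [Finsupp.sum_add_index' (fun _ ↦ rfl) (fun _ _ _ ↦ rfl),
    Finsupp.sum_single_index rfl] at hle
  exact (hdeg.trans_lt (Nat.lt_succ_self _)).trans_le hle

lemma eq_C_of_pderiv_eq_zero {R : Type*} [CommRing R] [IsAddTorsionFree R]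
    {P : MvPolynomial σ R} (h : ∀ i, pderiv i P = 0) : P = C (coeff 0 P) := by
  apply MvPolynomial.coe_injective
  refine MvPowerSeries.pderiv.ext (fun i ↦ ?_) ?_
  · simp [MvPowerSeries.pderiv_coe, h i]
  · rw [← MvPowerSeries.coeff_zero_eq_constantCoeff_apply, MvPolynomial.coeff_coe]
    simp

lemma finrank_restrictDegree {R : Type*} [CommRing R] [Nontrivial R] [Fintype σ] (n : ℕ) :
    Module.finrank R (restrictDegree σ R n) = (n + 1) ^ Fintype.card σ := by
  rw [restrictDegree, Module.finrank_eq_nat_card_basis (basisRestrictSupport R _)]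
  have e : {m : σ →₀ ℕ | ∀ i, m i ≤ n} ≃ (σ → {j // j ≤ n}) :=
    (Finsupp.equivFunOnFinite.subtypeEquiv fun _ ↦ Iff.rfl).trans
      (Equiv.subtypePiEquivPi (p := fun _ j ↦ j ≤ n))
  have hj : Nat.card {j // j ≤ n} = n + 1 :=
    (Nat.card_coe_set_eq (Set.Iic n)).trans (Set.ncard_Iic_nat n)
  rw [Nat.card_congr e, Nat.card_fun, hj, Nat.card_eq_fintype_card]

lemma totalDegree_le_of_mem_restrictDegree {R : Type*} [CommSemiring R] [Fintype σ] {n : ℕ}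
    {P : MvPolynomial σ R} (h : P ∈ restrictDegree σ R n) :
    P.totalDegree ≤ Fintype.card σ * n := by
  refine Finset.sup_le fun m hm ↦ ?_
  rw [Finsupp.sum_fintype _ _ fun _ ↦ rfl]
  simpa using Finset.sum_le_card_nsmul Finset.univ m n fun i _ ↦
    (mem_restrictDegree σ P n).mp h m hm i

/- Each curve imposes `card σ * n * k + 1` linear conditions, the coefficients of the restriction,
on a space of dimension `(n + 1) ^ card σ`. -/
lemma exists_ne_zero_aeval_eq_zero {K ι : Type*} [Field K] [Fintype σ] [Fintype ι]
    (γ : ι → σ → Polynomial K) {k n : ℕ} (hγ : ∀ j i, (γ j i).natDegree ≤ k)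
    (hn : Fintype.card ι * (Fintype.card σ * n * k + 1) < (n + 1) ^ Fintype.card σ) :
    ∃ P : MvPolynomial σ K, P ≠ 0 ∧ P.totalDegree ≤ Fintype.card σ * n ∧
      ∀ j, aeval (γ j) P = 0 := by
  let restrict (j : ι) :
      restrictDegree σ K n →ₗ[K] Polynomial.degreeLT K (Fintype.card σ * n * k + 1) :=
    ((aeval (γ j)).toLinearMap.domRestrict _).codRestrict _ fun P ↦
      Polynomial.mem_degreeLT.mpr <| Polynomial.degree_le_natDegree.trans_lt <|
        Nat.cast_lt.mpr <| Nat.lt_succ_of_le <|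
          aeval_natDegree_le _ (totalDegree_le_of_mem_restrictDegree P.2) _ (hγ j)
  have hker : LinearMap.ker (LinearMap.pi restrict) ≠ ⊥ := by
    apply LinearMap.ker_ne_bot_of_finrank_lt
    rw [finrank_restrictDegree, Module.finrank_pi_fintype]
    simpa [(Polynomial.degreeLTEquiv K _).finrank_eq] using hn
  obtain ⟨P, hP, hP0⟩ := Submodule.exists_mem_ne_zero_of_ne_bot hker
  refine ⟨P, by simpa using hP0, totalDegree_le_of_mem_restrictDegree P.2, fun j ↦ ?_⟩
  exact congrArg Subtype.val (congrFun (LinearMap.mem_ker.mp hP) j)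

end MvPolynomialLemmas

lemma encard_le_natDegree_of_eval_eq_zero {R : Type*} [CommRing R] [IsDomain R]
    {q : Polynomial R} (hq : q ≠ 0) {S : Set R} (hS : ∀ t ∈ S, q.eval t = 0) :
    S.encard ≤ q.natDegree := by
  classical
  have hsub : S ⊆ q.roots.toFinset := fun t ht ↦ by
    simpa [hq] using hS t ht
  calc S.encard ≤ (q.roots.toFinset : Set R).encard := Set.encard_le_encard hsub
    _ = q.roots.toFinset.card := Set.encard_coe_eq_coe_finsetCard _
    _ ≤ q.natDegree := mod_cast (Multiset.toFinset_card_le _).trans q.card_roots'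

section JetLift

open MvPolynomial
open scoped Polynomial

variable {K : Type*} [Field K]

/-- The curve `t ↦ (t, f(t), f'(t))` lifting the graph of `f` to three-space, its coordinates
being kept as polynomials in `t`. -/
def jetLift (f : K[X]) : Fin 3 → K[X] :=
  ![Polynomial.X, f, Polynomial.derivative f]

/-- The 1-jet of `f` at `t`: the point of `jetLift f` with parameter `t`. -/
def jetAt (f : K[X]) (t : K) : Fin 3 → K :=
  fun i ↦ (jetLift f i).eval t

/-- The graphs of `f` and `g` are tangent at the parameter `t`, to order exactly one. -/
structure IsSimpleTangency (f g : K[X]) (t : K) : Prop where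
  jetAt_eq : jetAt f t = jetAt g t
  second_derivative_ne : f.derivative.derivative.eval t ≠ g.derivative.derivative.eval t

/-- The parameters at which the graph of `f` is simply tangent to the graph of a member of `F`. -/
def tangencyParams (F : Finset K[X]) (f : K[X]) : Set K :=
  {t | ∃ g ∈ F, IsSimpleTangency f g t}

/-- The 1-jets at which the graphs of two members of `F` are simply tangent. -/
def tangencyJets (F : Finset K[X]) : Set (Fin 3 → K) :=
  {v | ∃ f ∈ F, ∃ t ∈ tangencyParams F f, jetAt f t = v}

/-- The polynomials in three variables that vanish identically on the lifts of all members
of `F`. -/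
def liftIdeal (F : Finset K[X]) : Ideal (MvPolynomial (Fin 3) K) :=
  ⨅ f ∈ F, RingHom.ker (aeval (R := K) (jetLift f))

/-- The vector field `∂₀ + x₂ ∂₁`. Together with `∂₂` it spans the contact distribution
`dx₁ = x₂ dx₀`, to which every `jetLift` is tangent. -/
def contactDeriv : Derivation K (MvPolynomial (Fin 3) K) (MvPolynomial (Fin 3) K) :=
  pderiv 0 + (X 2 : MvPolynomial (Fin 3) K) • pderiv 1

lemma mem_liftIdeal {F : Finset K[X]} {P : MvPolynomial (Fin 3) K} :
    P ∈ liftIdeal F ↔ ∀ f ∈ F, aeval (jetLift f) P = 0 := by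
  simp [liftIdeal, RingHom.mem_ker]

lemma natDegree_jetLift_le {f : K[X]} {k : ℕ} (hk : 1 ≤ k) (hf : f.natDegree ≤ k) (i : Fin 3) :
    (jetLift f i).natDegree ≤ k := by
  fin_cases i
  · exact Polynomial.natDegree_X_le.trans hk
  · exact hf
  · exact (Polynomial.natDegree_derivative_le f).trans (by omega)

lemma eval_aeval_jetLift (f : K[X]) (P : MvPolynomial (Fin 3) K) (t : K) :
    (aeval (jetLift f) P).eval t = eval (jetAt f t) P := by
  rw [← Polynomial.coe_aeval_eq_eval, ← AlgHom.comp_apply, comp_aeval, aeval_eq_eval]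
  rfl

lemma contactDeriv_apply (P : MvPolynomial (Fin 3) K) :
    contactDeriv P = pderiv 0 P + X 2 * pderiv 1 P := rfl

lemma derivative_aeval_jetLift (f : K[X]) (P : MvPolynomial (Fin 3) K) :
    (aeval (jetLift f) P).derivative =
      aeval (jetLift f) (contactDeriv P) +
        aeval (jetLift f) (pderiv 2 P) * f.derivative.derivative := by
  have h := derivation_aeval Polynomial.derivative' (jetLift f) P
  simpa [Fin.sum_univ_three, contactDeriv_apply, jetLift, mul_comm] using h

lemma lie_pderiv_two_contactDeriv :
    ⁅(pderiv 2 : Derivation K (MvPolynomial (Fin 3) K) (MvPolynomial (Fin 3) K)),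
      contactDeriv (K := K)⁆ = pderiv 1 := by
  refine MvPolynomial.derivation_ext fun i ↦ ?_
  fin_cases i <;>
    simp [Derivation.commutator_apply, contactDeriv_apply, pderiv_X]

lemma pderiv_two_contactDeriv (P : MvPolynomial (Fin 3) K) :
    pderiv 2 (contactDeriv P) = contactDeriv (pderiv 2 P) + pderiv 1 P := by
  rw [← lie_pderiv_two_contactDeriv, Derivation.commutator_apply]
  ring

lemma totalDegree_contactDeriv_le (P : MvPolynomial (Fin 3) K) :
    (contactDeriv P).totalDegree ≤ P.totalDegree := by
  have hX : (X 2 * pderiv 1 P).totalDegree ≤ P.totalDegree := by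
    by_cases h : pderiv 1 P = 0
    · simp [h]
    · have := totalDegree_mul (X 2) (pderiv 1 P)
      rw [totalDegree_X] at this
      have := totalDegree_pderiv_lt h
      omega
  have h0 : (pderiv 0 P).totalDegree ≤ P.totalDegree := by
    by_cases h : pderiv 0 P = 0
    · simp [h]
    · exact (totalDegree_pderiv_lt h).le
  exact (totalDegree_add _ _).trans (max_le h0 hX)

lemma IsSimpleTangency.symm {f g : K[X]} {t : K} (h : IsSimpleTangency f g t) :
    IsSimpleTangency g f t :=
  ⟨h.jetAt_eq.symm, h.second_derivative_ne.symm⟩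

lemma isSimpleTangency_of_natDegree_le_two [CharZero K] {f g : K[X]} {t : K}
    (hf : f.natDegree ≤ 2) (hg : g.natDegree ≤ 2) (hjet : jetAt f t = jetAt g t) (hne : f ≠ g) :
    IsSimpleTangency f g t := by
  refine ⟨hjet, fun h₂ ↦ ?_⟩
  have hsub : f - g ≠ 0 := sub_ne_zero.mpr hne
  have hroot : ∀ m ≤ 2, (Polynomial.derivative^[m] (f - g)).IsRoot t := by
    intro m hm
    interval_cases m
    · simpa [jetAt, jetLift, sub_eq_zero] using congrFun hjet 1
    · simpa [jetAt, jetLift, sub_eq_zero] using congrFun hjet 2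
    · simpa [sub_eq_zero] using h₂
  have hmul : (f - g).rootMultiplicity t ≤ (f - g).natDegree := by
    classical
    exact (Polynomial.count_roots (f - g) ▸ Multiset.count_le_card t _).trans
      (Polynomial.card_roots' _)
  have hlt := Polynomial.lt_rootMultiplicity_of_isRoot_iterate_derivative hsub hroot
  exact (hlt.trans_le hmul).not_ge (Polynomial.natDegree_sub_le_of_le hf hg)

/- Two lifts through a common point have velocities `contactDeriv + f'' ∂₂` and
`contactDeriv + g'' ∂₂`, so their difference is a nonzero multiple of `∂₂`. -/
lemma IsSimpleTangency.eval_pderiv_two_eq_zero {f g : K[X]} {t : K}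
    (h : IsSimpleTangency f g t) {P : MvPolynomial (Fin 3) K}
    (hf : aeval (jetLift f) P = 0) (hg : aeval (jetLift g) P = 0) :
    eval (jetAt f t) (pderiv 2 P) = 0 := by
  have hf' := congrArg (Polynomial.eval t) (derivative_aeval_jetLift f P)
  have hg' := congrArg (Polynomial.eval t) (derivative_aeval_jetLift g P)
  simp only [hf, hg, Polynomial.derivative_zero, Polynomial.eval_zero, Polynomial.eval_add,
    Polynomial.eval_mul, eval_aeval_jetLift, ← h.jetAt_eq] at hf' hg'
  refine (mul_eq_zero.mp ?_).resolve_right (sub_ne_zero.mpr h.second_derivative_ne)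
  linear_combination hg' - hf'

section ManyTangencies

variable {F : Finset K[X]} {k N : ℕ} {P : MvPolynomial (Fin 3) K}

lemma pderiv_two_mem_liftIdeal (hk : 1 ≤ k) (hF : ∀ f ∈ F, f.natDegree ≤ k)
    (hmany : ∀ f ∈ F, ((N * k : ℕ) : ℕ∞) < (tangencyParams F f).encard)
    (hP : P ∈ liftIdeal F) (hdeg : P.totalDegree ≤ N) : pderiv 2 P ∈ liftIdeal F := by
  rw [mem_liftIdeal] at hP ⊢
  intro f hf
  have hdeg' : (pderiv 2 P).totalDegree ≤ N := by
    by_cases h : pderiv 2 P = 0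
    · simp [h]
    · exact (totalDegree_pderiv_lt h).le.trans hdeg
  by_contra hne
  refine (hmany f hf).not_ge ((encard_le_natDegree_of_eval_eq_zero hne ?_).trans ?_)
  · rintro t ⟨g, hg, ht⟩
    rw [eval_aeval_jetLift]
    exact ht.eval_pderiv_two_eq_zero (hP f hf) (hP g hg)
  · exact mod_cast aeval_natDegree_le _ hdeg' _ (natDegree_jetLift_le hk (hF f hf))

lemma contactDeriv_mem_liftIdeal (hP : P ∈ liftIdeal F) (hP₂ : pderiv 2 P ∈ liftIdeal F) :
    contactDeriv P ∈ liftIdeal F := by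
  rw [mem_liftIdeal] at hP hP₂ ⊢
  intro f hf
  have h := derivative_aeval_jetLift f P
  simpa [hP f hf, hP₂ f hf] using h.symm

variable [CharZero K]

lemma eq_zero_of_mem_liftIdeal (hne : F.Nonempty) (hk : 1 ≤ k)
    (hF : ∀ f ∈ F, f.natDegree ≤ k)
    (hmany : ∀ f ∈ F, ((N * k : ℕ) : ℕ∞) < (tangencyParams F f).encard)
    (hP : P ∈ liftIdeal F) (hdeg : P.totalDegree ≤ N) : P = 0 := by
  induction hd : P.totalDegree using Nat.strong_induction_on generalizing P with
  | _ d ih =>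
    have pderiv_eq_zero (i : Fin 3) (hi : pderiv i P ∈ liftIdeal F) : pderiv i P = 0 := by
      by_contra h
      have hlt := totalDegree_pderiv_lt h
      exact h (ih _ (hd ▸ hlt) hi (hlt.le.trans hdeg) rfl)
    have hP₂ := pderiv_two_mem_liftIdeal hk hF hmany hP hdeg
    have h₂ := pderiv_eq_zero 2 hP₂
    have hcontact := contactDeriv_mem_liftIdeal hP hP₂
    have h₁ : pderiv 1 P = 0 := by
      apply pderiv_eq_zero 1
      have h := pderiv_two_mem_liftIdeal hk hF hmany hcontact
        ((totalDegree_contactDeriv_le P).trans hdeg)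
      simpa [pderiv_two_contactDeriv, h₂] using h
    have h₀ : pderiv 0 P = 0 := by
      apply pderiv_eq_zero 0
      simpa [contactDeriv_apply, h₁] using hcontact
    have hconst : P = C (coeff 0 P) :=
      eq_C_of_pderiv_eq_zero <| by simp [Fin.forall_fin_succ, h₀, h₁, h₂]
    obtain ⟨f, hf⟩ := hne
    have hzero := mem_liftIdeal.mp hP f hf
    rw [hconst, aeval_C, Polynomial.algebraMap_eq, Polynomial.C_eq_zero] at hzero
    rw [hconst, hzero, C_0]

lemma exists_tangencyParams_encard_le {D : ℕ} (hne : F.Nonempty) (hk : 1 ≤ k)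
    (hF : ∀ f ∈ F, f.natDegree ≤ k) (hD : F.card * (3 * D * k + 1) < (D + 1) ^ 3) :
    ∃ f ∈ F, (tangencyParams F f).encard ≤ (3 * D * k : ℕ) := by
  by_contra! hmany
  obtain ⟨P, hP0, hdeg, hP⟩ := exists_ne_zero_aeval_eq_zero (n := D)
    (fun f : F ↦ jetLift f.1) (fun f ↦ natDegree_jetLift_le hk (hF f f.2)) (by simpa using hD)
  rw [Fintype.card_fin] at hdeg
  exact hP0 (eq_zero_of_mem_liftIdeal hne hk hF hmany
    (mem_liftIdeal.mpr fun f hf ↦ hP ⟨f, hf⟩) hdeg)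

end ManyTangencies

lemma tangencyJets_subset [DecidableEq K[X]] (F : Finset K[X]) (f : K[X]) :
    tangencyJets F ⊆ tangencyJets (F.erase f) ∪ jetAt f '' tangencyParams F f := by
  rintro v ⟨g, hg, t, ⟨g', hg', ht⟩, rfl⟩
  by_cases hgf : g = f
  · subst hgf
    exact Or.inr ⟨t, ⟨g', hg', ht⟩, rfl⟩
  by_cases hgf' : g' = f
  · subst hgf'
    exact Or.inr ⟨t, ⟨g, hg, ht.symm⟩, ht.symm.jetAt_eq⟩
  · exact Or.inl ⟨g, Finset.mem_erase.mpr ⟨hgf, hg⟩, t,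
      ⟨g', Finset.mem_erase.mpr ⟨hgf', hg'⟩, ht⟩, rfl⟩

theorem tangencyJets_encard_le [CharZero K] {F : Finset K[X]} {k D : ℕ} (hk : 1 ≤ k)
    (hF : ∀ f ∈ F, f.natDegree ≤ k) (hD : F.card * (3 * D * k + 1) < (D + 1) ^ 3) :
    (tangencyJets F).encard ≤ (F.card * (3 * D * k) : ℕ) := by
  classical
  induction hn : F.card generalizing F with
  | zero => simp [tangencyJets, Finset.card_eq_zero.mp hn]
  | succ n ih =>
    obtain ⟨f, hf, hfew⟩ := exists_tangencyParams_encard_le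
      (Finset.card_pos.mp (hn ▸ n.succ_pos)) hk hF hD
    have hcard : (F.erase f).card = n := by rw [Finset.card_erase_of_mem hf, hn]; rfl
    have hrest := ih (fun g hg ↦ hF g (Finset.mem_of_mem_erase hg))
      ((Nat.mul_le_mul_right _ (Finset.card_erase_le)).trans_lt hD) hcard
    calc (tangencyJets F).encard
        ≤ (tangencyJets (F.erase f)).encard + (jetAt f '' tangencyParams F f).encard :=
          (Set.encard_le_encard (tangencyJets_subset F f)).trans (Set.encard_union_le _ _)
      _ ≤ (n * (3 * D * k) : ℕ) + (3 * D * k : ℕ) :=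
          add_le_add hrest ((Set.encard_image_le _ _).trans hfew)
      _ = ((n + 1) * (3 * D * k) : ℕ) := by push_cast; ring

end JetLift

section Tangency

variable {V P : Type*} [NormedAddCommGroup V] [InnerProductSpace ℝ V] [MetricSpace P]
  [NormedAddTorsor V P] {a b p : P} {r s : ℝ}

lemma mem_line_of_sphere_inter_eq_singleton
    (h : Metric.sphere a r ∩ Metric.sphere b s = {p}) : p ∈ line[ℝ, a, b] := by
  have hp : p ∈ Metric.sphere a r ∩ Metric.sphere b s := h.ge rfl
  rw [← EuclideanGeometry.reflection_eq_self_iff, ← Set.mem_singleton_iff, ← h]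
  constructor
  · rw [Metric.mem_sphere, dist_comm,
      EuclideanGeometry.dist_reflection_eq_of_mem _ (left_mem_affineSpan_pair ℝ a b), dist_comm]
    exact hp.1
  · rw [Metric.mem_sphere, dist_comm,
      EuclideanGeometry.dist_reflection_eq_of_mem _ (right_mem_affineSpan_pair ℝ a b), dist_comm]
    exact hp.2

lemma exists_vsub_eq_smul_vsub_of_sphere_inter_eq_singleton (hr : 0 < r)
    (h : Metric.sphere a r ∩ Metric.sphere b s = {p}) :
    ∃ μ : ℝ, |μ * r| = s ∧ p -ᵥ b = μ • (p -ᵥ a) := by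
  have hp : p ∈ Metric.sphere a r ∩ Metric.sphere b s := h.ge rfl
  have hpa : ‖p -ᵥ a‖ = r := (dist_eq_norm_vsub V p a).symm.trans hp.1
  have hpb : ‖p -ᵥ b‖ = s := (dist_eq_norm_vsub V p b).symm.trans hp.2
  obtain ⟨l, rfl⟩ := mem_affineSpan_pair_iff_exists_lineMap_eq.mp
    (mem_line_of_sphere_inter_eq_singleton h)
  have hl : l ≠ 0 := by
    rintro rfl
    exact hr.ne (by simpa using hpa)
  have hμ : AffineMap.lineMap a b l -ᵥ b = ((l - 1) / l) • (AffineMap.lineMap a b l -ᵥ a) := by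
    rw [AffineMap.lineMap_vsub_left, AffineMap.lineMap_vsub_right, smul_smul,
      div_mul_cancel₀ _ hl, ← neg_vsub_eq_vsub_rev b a, smul_neg, ← neg_smul, neg_sub]
  refine ⟨(l - 1) / l, ?_, hμ⟩
  rw [← hpb, hμ, norm_smul, hpa, abs_mul, abs_of_pos hr, Real.norm_eq_abs]

end Tangency

section Circles

open Polynomial

/-- The support function `u ↦ ⟪a, u⟫ + ρ` of the circle with centre `a` and signed radius `ρ`, at
`u = ((1 - t²) / (1 + t²), 2t / (1 + t²))` and multiplied by `1 + t²`. The sign of `ρ` orients the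
circle; points are the circles with `ρ = 0`. -/
def supportPoly (a : Pt2) (ρ : ℝ) : ℝ[X] :=
  C (ρ - a 0) * X ^ 2 + C (2 * a 1) * X + C (a 0 + ρ)

/-- The point `p` for which `supportPoly p 0` has the 1-jet `v`. -/
def footPoint (v : Fin 3 → ℝ) : Pt2 :=
  !₂[(v 1 - v 0 * v 2) / (1 + v 0 ^ 2), v 2 / 2 + v 0 * ((v 1 - v 0 * v 2) / (1 + v 0 ^ 2))]

/-- The points at which two circles of `C` are tangent. -/
def tangencyPoints (C : Finset (Set Pt2)) : Set Pt2 :=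
  {p | ∃ c₁ ∈ C, ∃ c₂ ∈ C, c₁ ≠ c₂ ∧ c₁ ∩ c₂ = {p}}

variable {a b p : Pt2} {r s ρ t : ℝ}

lemma natDegree_supportPoly_le (a : Pt2) (ρ : ℝ) : (supportPoly a ρ).natDegree ≤ 2 :=
  natDegree_quadratic_le

lemma supportPoly_inj {σ : ℝ} (h : supportPoly a ρ = supportPoly b σ) : a = b ∧ ρ = σ := by
  have hcoeff (a : Pt2) (ρ : ℝ) : (supportPoly a ρ).coeff 0 = a 0 + ρ ∧
      (supportPoly a ρ).coeff 1 = 2 * a 1 ∧ (supportPoly a ρ).coeff 2 = ρ - a 0 := by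
    simp [supportPoly, coeff_C, coeff_X, -map_sub]
  obtain ⟨h₀, h₁, h₂⟩ := h ▸ hcoeff a ρ
  obtain ⟨h₀', h₁', h₂'⟩ := hcoeff b σ
  refine ⟨?_, by linarith⟩
  ext i
  match i with
  | 0 => linarith
  | 1 => linarith

lemma jetAt_supportPoly (a : Pt2) (ρ t : ℝ) :
    jetAt (supportPoly a ρ) t =
      ![t, (ρ - a 0) * t ^ 2 + 2 * a 1 * t + (a 0 + ρ), 2 * (ρ - a 0) * t + 2 * a 1] := by
  ext i
  fin_cases i <;> simp [jetAt, jetLift, supportPoly, derivative_mul]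
  ring

lemma footPoint_jetAt_supportPoly (p : Pt2) (t : ℝ) :
    footPoint (jetAt (supportPoly p 0) t) = p := by
  have ht : 1 + t ^ 2 ≠ 0 := by positivity
  ext i
  fin_cases i <;> simp [footPoint, jetAt_supportPoly] <;> field_simp <;> ring

/- With `u` the unit vector of parameter `t`, the hypotheses say that `p - a = ρ • u`. -/
lemma jetAt_supportPoly_eq_of_mem (hp : (p 0 - a 0) ^ 2 + (p 1 - a 1) ^ 2 = ρ ^ 2)
    (hne : ρ + (p 0 - a 0) ≠ 0) (ht : t * (ρ + (p 0 - a 0)) = p 1 - a 1) :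
    jetAt (supportPoly a ρ) t = jetAt (supportPoly p 0) t := by
  have hk : t ^ 2 * (ρ + (p 0 - a 0)) = ρ - (p 0 - a 0) := by
    apply mul_right_cancel₀ hne
    linear_combination (t * (ρ + (p 0 - a 0)) + (p 1 - a 1)) * ht + hp
  rw [jetAt_supportPoly, jetAt_supportPoly]
  congrm ![t, ?_, ?_]
  · linear_combination 2 * t * ht - hk
  · linear_combination 2 * ht

lemma jetAt_supportPoly_of_sub_eq_smul {μ : ℝ} (hμ : p - b = μ • (p - a))
    (h : jetAt (supportPoly a ρ) t = jetAt (supportPoly p 0) t) :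
    jetAt (supportPoly b (μ * ρ)) t = jetAt (supportPoly p 0) t := by
  have hμ₀ : p 0 - b 0 = μ * (p 0 - a 0) := congrArg (· 0) hμ
  have hμ₁ : p 1 - b 1 = μ * (p 1 - a 1) := congrArg (· 1) hμ
  rw [jetAt_supportPoly, jetAt_supportPoly] at h ⊢
  have h₁ := congrFun h 1
  have h₂ := congrFun h 2
  simp only [Matrix.cons_val] at h₁ h₂
  congrm ![t, ?_, ?_]
  · linear_combination μ * h₁ + (t ^ 2 - 1) * hμ₀ - 2 * t * hμ₁
  · linear_combination μ * h₂ + 2 * t * hμ₀ - 2 * hμ₁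

lemma sq_add_sq_eq_of_mem_sphere (hp : p ∈ Metric.sphere a r) :
    (p 0 - a 0) ^ 2 + (p 1 - a 1) ^ 2 = r ^ 2 := by
  rw [← mem_sphere_iff_norm.mp hp, EuclideanSpace.real_norm_sq_eq, Fin.sum_univ_two]
  rfl

lemma eq_of_mem_sphere_of_add_sub_eq_zero (hp : p ∈ Metric.sphere a r)
    (h : r + (p 0 - a 0) = 0) : p = !₂[a 0 - r, a 1] := by
  have hp₁ : (p 1 - a 1) ^ 2 = 0 := by
    linear_combination sq_add_sq_eq_of_mem_sphere hp + (r - (p 0 - a 0)) * h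
  ext i
  match i with
  | 0 => exact eq_sub_of_add_eq (by linarith)
  | 1 => exact sub_eq_zero.mp (sq_eq_zero_iff.mp hp₁)

lemma exists_isSimpleTangency_of_sphere_inter_eq_singleton (hr : 0 < r)
    (hne : Metric.sphere a r ≠ Metric.sphere b s)
    (h : Metric.sphere a r ∩ Metric.sphere b s = {p}) (hp : r + (p 0 - a 0) ≠ 0) :
    ∃ σ, |σ| = s ∧ ∃ t, IsSimpleTangency (supportPoly a r) (supportPoly b σ) t ∧
      footPoint (jetAt (supportPoly a r) t) = p := by
  obtain ⟨μ, hμs, hμ⟩ := exists_vsub_eq_smul_vsub_of_sphere_inter_eq_singleton hr h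
  have hpa : p ∈ Metric.sphere a r := (h.ge rfl).1
  let t := (p 1 - a 1) / (r + (p 0 - a 0))
  have hjet : jetAt (supportPoly a r) t = jetAt (supportPoly p 0) t :=
    jetAt_supportPoly_eq_of_mem (sq_add_sq_eq_of_mem_sphere hpa) hp (div_mul_cancel₀ _ hp)
  have hjet' : jetAt (supportPoly b (μ * r)) t = jetAt (supportPoly p 0) t :=
    jetAt_supportPoly_of_sub_eq_smul hμ hjet
  have hne' : supportPoly a r ≠ supportPoly b (μ * r) := by
    intro heq
    obtain ⟨rfl, hμr⟩ := supportPoly_inj heq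
    exact hne (by rw [← hμs, ← hμr, abs_of_pos hr])
  refine ⟨μ * r, hμs, t, ?_, by rw [hjet, footPoint_jetAt_supportPoly]⟩
  exact isSimpleTangency_of_natDegree_le_two (natDegree_supportPoly_le _ _)
    (natDegree_supportPoly_le _ _) (hjet.trans hjet'.symm) hne'

section Counting

variable {C : Finset (Set Pt2)}

/- The set `E` collects the points at the parameter `t = ∞`, one for each circle. -/
lemma exists_tangencyPoints_subset (hC : ∀ c ∈ C, IsCircle2 c) :
    ∃ F : Finset ℝ[X], ∃ E : Finset Pt2, F.card ≤ 2 * C.card ∧ E.card ≤ C.card ∧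
      (∀ f ∈ F, f.natDegree ≤ 2) ∧ tangencyPoints C ⊆ footPoint '' tangencyJets F ∪ E := by
  classical
  choose! a r hr hsphere using hC
  refine ⟨C.image (fun c ↦ supportPoly (a c) (r c)) ∪ C.image fun c ↦ supportPoly (a c) (-r c),
    C.image fun c ↦ !₂[a c 0 - r c, a c 1], ?_, Finset.card_image_le, ?_, ?_⟩
  · exact (Finset.card_union_le _ _).trans
      ((Nat.add_le_add Finset.card_image_le Finset.card_image_le).trans_eq (two_mul _).symm)
  · simp only [Finset.mem_union, Finset.mem_image]
    rintro f (⟨c, -, rfl⟩ | ⟨c, -, rfl⟩) <;> exact natDegree_supportPoly_le _ _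
  rintro p ⟨c, hc, c', hc', hne, htan⟩
  rw [hsphere c hc, hsphere c' hc'] at hne htan
  by_cases hp : r c + (p 0 - a c 0) = 0
  · have hpc := (htan.ge rfl).1
    exact Or.inr (Finset.mem_image.mpr ⟨c, hc, (eq_of_mem_sphere_of_add_sub_eq_zero hpc hp).symm⟩)
  · obtain ⟨σ, hσ, t, ht, hfoot⟩ := exists_isSimpleTangency_of_sphere_inter_eq_singleton
      (hr c hc) hne htan hp
    refine Or.inl ⟨_, ⟨_, ?_, t, ⟨_, ?_, ht⟩, rfl⟩, hfoot⟩
    · simp only [Finset.mem_union, Finset.mem_image]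
      exact Or.inl ⟨c, hc, rfl⟩
    · simp only [Finset.mem_union, Finset.mem_image]
      rcases (abs_eq (hr c' hc').le).mp hσ with rfl | rfl
      · exact Or.inl ⟨c', hc', rfl⟩
      · exact Or.inr ⟨c', hc', rfl⟩

lemma tangencyPoints_ncard_le (hC : ∀ c ∈ C, IsCircle2 c) {D : ℕ}
    (hD : 2 * C.card * (6 * D + 1) < (D + 1) ^ 3) :
    (tangencyPoints C).ncard ≤ C.card * (12 * D + 1) := by
  obtain ⟨F, E, hF, hE, hdeg, hsub⟩ := exists_tangencyPoints_subset hC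
  have hD' : F.card * (3 * D * 2 + 1) < (D + 1) ^ 3 := by
    refine (Nat.mul_le_mul hF ?_).trans_lt hD
    omega
  have hjets := tangencyJets_encard_le one_le_two hdeg hD'
  have hle : (tangencyPoints C).encard ≤ (C.card * (12 * D + 1) : ℕ) :=
    calc (tangencyPoints C).encard
        ≤ (footPoint '' tangencyJets F).encard + (E : Set Pt2).encard :=
          (Set.encard_le_encard hsub).trans (Set.encard_union_le _ _)
      _ ≤ (F.card * (3 * D * 2) : ℕ) + (E.card : ℕ) :=
          add_le_add ((Set.encard_image_le _ _).trans hjets)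
            (Set.encard_coe_eq_coe_finsetCard E).le
      _ ≤ (C.card * (12 * D + 1) : ℕ) := by
          norm_cast
          have := Nat.mul_le_mul_right (3 * D * 2) hF
          linarith
  exact ENat.toNat_le_of_le_natCast hle

end Counting

end Circles

lemma two_mul_mul_six_mul_sqrt_add_one_lt (n : ℕ) :
    2 * n * (6 * Nat.sqrt (12 * n) + 1) < (Nat.sqrt (12 * n) + 1) ^ 3 := by
  set D := Nat.sqrt (12 * n)
  have hD : 12 * n < (D + 1) ^ 2 := Nat.lt_succ_sqrt' (12 * n)
  calc 2 * n * (6 * D + 1) ≤ 12 * n * (D + 1) := by linarith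
    _ < (D + 1) ^ 2 * (D + 1) := Nat.mul_lt_mul_of_pos_right hD D.succ_pos
    _ = (D + 1) ^ 3 := by ring

lemma mul_twelve_mul_sqrt_add_one_le (n : ℕ) :
    (n * (12 * Nat.sqrt (12 * n) + 1) : ℝ) ≤ 49 * (n : ℝ) ^ ((3 : ℝ) / 2) := by
  have hpow : (n : ℝ) ^ ((3 : ℝ) / 2) = n * √n := by
    rw [Real.sqrt_eq_rpow, ← Real.rpow_one_add' n.cast_nonneg (by norm_num)]
    norm_num
  obtain rfl | hn := n.eq_zero_or_pos
  · simp
  have hsqrt : (Nat.sqrt (12 * n) : ℝ) ≤ 4 * √n := by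
    calc (Nat.sqrt (12 * n) : ℝ) ≤ √(12 * n : ℕ) := Real.nat_sqrt_le_real_sqrt
      _ ≤ √(4 ^ 2 * n) := Real.sqrt_le_sqrt (by push_cast; linarith [n.cast_nonneg (α := ℝ)])
      _ = 4 * √n := by rw [Real.sqrt_mul (by norm_num), Real.sqrt_sq (by norm_num)]
  have hone : 1 ≤ √(n : ℝ) := Real.one_le_sqrt.mpr (mod_cast hn)
  rw [hpow]
  calc (n * (12 * Nat.sqrt (12 * n) + 1) : ℝ) ≤ n * (12 * (4 * √n) + √n) := by gcongr
    _ = 49 * (n * √n) := by ring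

theorem circle_tangency_points :
    ∃ A : ℝ, 0 < A ∧
      ∀ (n : ℕ) (C : Finset (Set Pt2)),
        C.card = n → (∀ s ∈ C, IsCircle2 s) →
        (({p : Pt2 | ∃ c1 ∈ C, ∃ c2 ∈ C, c1 ≠ c2 ∧ c1 ∩ c2 = {p}}).ncard : ℝ) ≤
          A * (n : ℝ) ^ ((3 : ℝ) / 2) := by
  refine ⟨49, by norm_num, fun n C hn hC ↦ ?_⟩
  subst hn
  have hcount : (tangencyPoints C).ncard ≤ C.card * (12 * Nat.sqrt (12 * C.card) + 1) :=
    tangencyPoints_ncard_le hC (two_mul_mul_six_mul_sqrt_add_one_lt _)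
  calc ((tangencyPoints C).ncard : ℝ)
      ≤ C.card * (12 * Nat.sqrt (12 * C.card) + 1) := mod_cast hcount
    _ ≤ 49 * (C.card : ℝ) ^ ((3 : ℝ) / 2) := mul_twelve_mul_sqrt_add_one_le _
end
end
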